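/- arXiv:1204.0543 — 2 statements merged into one kernel-verified Lean document; each statement's English description precedes it below -/
import Mathlib

section
/- Let c, N > 0 be real numbers and d a positive integer. There exist constants ε₀ > 0 and C' > 0 depending only on N, c, d such that: for every 0 < ε < ε₀ and every polynomial p : ℝⁿ → ℝ of degree at most d satisfying Pr_X(‖∇p(X)‖₂ < ε) > ε^N, one has Pr_{X,Y}(‖(Hess p)(X)·Y‖₂ < ε^{1−c}) > ε^{C'}, where X and Y are independent standard Gaussian random vectors on ℝⁿ, ∇p is the gradient of p, and (Hess p)(X)·Y is the Hessian matrix of p evaluated at X applied to the vector Y. -/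
open MeasureTheory ProbabilityTheory

/-- The standard Gaussian measure on `ℝⁿ`. -/
noncomputable def stdGaussian (n : ℕ) : Measure (Fin n → ℝ) :=
  Measure.pi fun _ => gaussianReal 0 1

/-!
A random slice. For independent Gaussian vectors `X₀, …, X_K`, restrict the polynomial map `f = ∇p`
to the ellipsoid `∑ θⱼ Xⱼ`, `‖θ‖ = 1`, parametrized rationally by stereographic coordinates `t`. At
every fixed `t` the point of the ellipsoid is Gaussian, and the derivative of `f` in a normalized
direction tangent to it is distributed as `(Hess p)(X) · Y`.

A fixed slice. Scalar products of `f` with `K` random Gaussian vectors give a rational map of `ℝᴷ`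
to itself, almost all of whose fibres are finite with a bound depending only on `K` and the degree.
By the area formula, the `t` in the unit cube where `f` is smaller than `ε` but its derivatives in
all directions are at least `τ` have volume `O((ε / τ) ^ K)`.

For `τ = ε ^ (1 - c) / 2` and `K` large this is far below `ε ^ N`. Hence, when `f` is small, the
derivative is usually small in some direction. The case `K = 1` shows that derivatives are rarely
larger than `ε ^ (-N)`, so a net of polynomially many directions suffices, and some fixed direction
works with probability at least a power of `ε`.
-/

section Fibres

open MvPolynomial

lemma ae_eval_ne_zero {n : ℕ} {p : MvPolynomial (Fin n) ℝ} (hp : p ≠ 0) :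
    ∀ᵐ x : Fin n → ℝ, eval x p ≠ 0 := by
  induction n with
  | zero =>
    refine Filter.Eventually.of_forall fun x hx => hp (MvPolynomial.funext fun z => ?_)
    rw [Subsingleton.elim z x, hx, map_zero]
  | succ n ih =>
    have hlead : (finSuccEquiv ℝ n p).leadingCoeff ≠ 0 := by simpa using hp
    let e := MeasurableEquiv.piFinSuccAbove (fun _ : Fin (n + 1) => ℝ) 0
    have he : ∀ z y, e.symm (z, y) = Fin.cons z y := fun z y => Fin.insertNth_zero' z y
    have hset : MeasurableSet {z : ℝ × (Fin n → ℝ) | eval (e.symm z) p = 0} :=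
      ((continuous_eval p).measurable.comp e.symm.measurable) (measurableSet_singleton 0)
    have hnull : volume {z : ℝ × (Fin n → ℝ) | eval (e.symm z) p = 0} = 0 := by
      rw [Measure.volume_eq_prod, Measure.prod_apply_symm hset,
        lintegral_eq_zero_iff (measurable_measure_prodMk_right hset)]
      filter_upwards [ih hlead] with y hy
      have hmap : (finSuccEquiv ℝ n p).map (eval y) ≠ 0 := fun h => hy <| by
        simpa using congrArg (Polynomial.coeff · (finSuccEquiv ℝ n p).natDegree) h
      refine ((Polynomial.finite_setOfPred_isRoot hmap).subset fun z hz => ?_).measure_zero _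
      rwa [Set.mem_preimage, Set.mem_ofPred_eq, he, eval_eq_eval_mv_eval'] at hz
    have hae := (volume_preserving_piFinSuccAbove (fun _ : Fin (n + 1) => ℝ)
      0).quasiMeasurePreserving.ae (measure_eq_zero_iff_ae_notMem.1 hnull)
    exact hae.mono fun x hx => by rwa [← e.symm_apply_apply x]

lemma finrank_restrictDegree {R : Type*} [CommRing R] [Nontrivial R] (n D : ℕ) :
    Module.finrank R (restrictDegree (Fin n) R D) = (D + 1) ^ n := by
  let e : {s : Fin n →₀ ℕ | ∀ i, s i ≤ D} ≃ (Fin n → Fin (D + 1)) :=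
    { toFun s i := ⟨s.1 i, Nat.lt_succ_of_le (s.2 i)⟩
      invFun b := ⟨Finsupp.equivFunOnFinite.symm fun i => b i, fun i => Nat.le_of_lt_succ (b i).2⟩
      left_inv s := by ext; simp
      right_inv b := by ext; simp }
  calc _ = Nat.card {s : Fin n →₀ ℕ | ∀ i, s i ≤ D} :=
        Module.finrank_eq_nat_card_basis (basisRestrictSupport R _)
    _ = (D + 1) ^ n := by rw [Nat.card_congr e]; simp

/-- The substitution of `z, p₀ / q, …, pₙ₋₁ / q` for the variables of a polynomial of degree at most
`J` in each of them, multiplied by `q ^ (n * J)` to clear the denominators. -/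
noncomputable def clearDenominators {σ : Type*} {n : ℕ} (q : MvPolynomial σ ℝ)
    (p : Fin n → MvPolynomial σ ℝ) (z : MvPolynomial σ ℝ) (J : ℕ) :
    MvPolynomial (Fin (n + 1)) ℝ →ₗ[ℝ] MvPolynomial σ ℝ :=
  (basisMonomials (Fin (n + 1)) ℝ).constr ℝ fun s =>
    z ^ s 0 * ∏ j, p j ^ s j.succ * q ^ (J - s j.succ)

section

variable {σ : Type*} {n : ℕ} {q : MvPolynomial σ ℝ} {p : Fin n → MvPolynomial σ ℝ}
  {z : MvPolynomial σ ℝ} {J : ℕ}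

lemma clearDenominators_eq_sum (R : MvPolynomial (Fin (n + 1)) ℝ) :
    clearDenominators q p z J R =
      ∑ s ∈ R.support, R.coeff s • (z ^ s 0 * ∏ j, p j ^ s j.succ * q ^ (J - s j.succ)) := by
  conv_lhs => rw [R.as_sum]
  rw [map_sum]
  refine Finset.sum_congr rfl fun s _ => ?_
  have hs : monomial s (R.coeff s) = R.coeff s • basisMonomials (Fin (n + 1)) ℝ s := by
    simp [smul_monomial]
  rw [hs, map_smul, clearDenominators, Module.Basis.constr_basis]

lemma totalDegree_clearDenominators_le {m : ℕ} (hq : q.totalDegree ≤ m)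
    (hp : ∀ j, (p j).totalDegree ≤ m) (hz : z.totalDegree ≤ 1)
    {R : MvPolynomial (Fin (n + 1)) ℝ} (hR : R ∈ restrictDegree (Fin (n + 1)) ℝ J) :
    (clearDenominators q p z J R).totalDegree ≤ (n * m + 1) * J := by
  have hdeg := (mem_restrictDegree _ _ _).1 hR
  rw [clearDenominators_eq_sum]
  refine totalDegree_finsetSum_le fun s hs => (totalDegree_smul_le _ _).trans ?_
  have hz' : (z ^ s 0).totalDegree ≤ J :=
    (totalDegree_pow _ _).trans ((Nat.mul_le_mul (hdeg s hs 0) hz).trans_eq (mul_one J))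
  have hfactor : ∀ j, (p j ^ s j.succ * q ^ (J - s j.succ)).totalDegree ≤ J * m := fun j => calc
    _ ≤ s j.succ * m + (J - s j.succ) * m := (totalDegree_mul _ _).trans <| add_le_add
      ((totalDegree_pow _ _).trans (Nat.mul_le_mul_left _ (hp j)))
      ((totalDegree_pow _ _).trans (Nat.mul_le_mul_left _ hq))
    _ = J * m := by rw [← add_mul, Nat.add_sub_cancel' (hdeg s hs _)]
  calc _ ≤ J + ∑ _j : Fin n, J * m := (totalDegree_mul _ _).trans <| add_le_add hz' <|
        (totalDegree_finsetProd _ _).trans (Finset.sum_le_sum fun j _ => hfactor j)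
    _ = (n * m + 1) * J := by simp; ring

lemma eval_clearDenominators {R : MvPolynomial (Fin (n + 1)) ℝ}
    (hR : R ∈ restrictDegree (Fin (n + 1)) ℝ J) {t : σ → ℝ} {y : Fin n → ℝ}
    (hy : ∀ j, eval t (p j) = eval t q * y j) :
    eval t (clearDenominators q p z J R) =
      eval t q ^ (n * J) * eval (Fin.cons (eval t z) y : Fin (n + 1) → ℝ) R := by
  rw [clearDenominators_eq_sum, map_sum, eval_eq' (Fin.cons _ _), Finset.mul_sum]
  refine Finset.sum_congr rfl fun s hs => ?_
  have hfactor : ∀ j, eval t (p j ^ s j.succ * q ^ (J - s j.succ)) =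
      eval t q ^ J * y j ^ s j.succ := fun j => by
    rw [map_mul, map_pow, map_pow, hy, mul_pow, mul_right_comm, ← pow_add,
      Nat.add_sub_cancel' ((mem_restrictDegree _ _ _).1 hR s hs _)]
  rw [smul_eval, map_mul, map_prod, Finset.prod_congr rfl fun j _ => hfactor j]
  simp only [map_pow, Finset.prod_mul_distrib, Finset.prod_const, Finset.card_univ,
    Fintype.card_fin, Fin.prod_univ_succ, Fin.cons_zero, Fin.cons_succ]
  ring

end

/- Counting dimensions: `clearDenominators` maps `(J + 1) ^ (n + 1)` free coefficients into
polynomials in `n` variables of degree `O(J)`, so its kernel is nonzero for large `J`. -/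
lemma exists_polynomial_relation {n m : ℕ} {q : MvPolynomial (Fin n) ℝ}
    {p : Fin n → MvPolynomial (Fin n) ℝ} {z : MvPolynomial (Fin n) ℝ}
    (hq : q.totalDegree ≤ m) (hp : ∀ j, (p j).totalDegree ≤ m) (hz : z.totalDegree ≤ 1) :
    ∃ R ∈ restrictDegree (Fin (n + 1)) ℝ ((n * m + 1) ^ n), R ≠ 0 ∧
      ∀ t y, eval t q ≠ 0 → (∀ j, eval t (p j) = eval t q * y j) →
        eval (Fin.cons (eval t z) y : Fin (n + 1) → ℝ) R = 0 := by
  set J := (n * m + 1) ^ n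
  let T : restrictDegree (Fin (n + 1)) ℝ J →ₗ[ℝ]
      restrictTotalDegree (Fin n) ℝ ((n * m + 1) * J) :=
    (clearDenominators q p z J).restrict fun R hR =>
      (mem_restrictTotalDegree _ _ _).2 (totalDegree_clearDenominators_le hq hp hz hR)
  have hrank : Module.finrank ℝ (restrictTotalDegree (Fin n) ℝ ((n * m + 1) * J)) <
      Module.finrank ℝ (restrictDegree (Fin (n + 1)) ℝ J) := calc
    _ ≤ ((n * m + 1) * J + 1) ^ n := finrank_restrictDegree (R := ℝ) n ((n * m + 1) * J) ▸
      Submodule.finrank_mono (restrictTotalDegree_le_restrictDegree _ _ _)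
    _ ≤ ((n * m + 1) * (J + 1)) ^ n := Nat.pow_le_pow_left (by nlinarith) n
    _ = J * (J + 1) ^ n := mul_pow _ _ _
    _ < (J + 1) * (J + 1) ^ n := Nat.mul_lt_mul_of_pos_right J.lt_succ_self (by positivity)
    _ = _ := by rw [finrank_restrictDegree, pow_succ']
  obtain ⟨R, hker, hR⟩ :=
    Submodule.exists_mem_ne_zero_of_ne_bot (LinearMap.ker_ne_bot_of_finrank_lt (f := T) hrank)
  refine ⟨R, R.2, by simpa using hR, fun t y hqt hy => ?_⟩
  have hTR : clearDenominators q p z J R = 0 := congrArg Subtype.val (LinearMap.mem_ker.1 hker)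
  have heval := eval_clearDenominators (z := z) R.2 hy
  rw [hTR, map_zero] at heval
  exact (mul_eq_zero.1 heval.symm).resolve_left (pow_ne_zero _ hqt)

/-- For a rational map of `ℝⁿ` to itself whose components have a common denominator and degree at
most `m`, a bound on the number of points of almost every fibre. -/
def fiberBound (n m : ℕ) : ℕ := ((n * m + 1) ^ n) ^ n

lemma ae_exists_finset_coordinate_mem {n m : ℕ} {q : MvPolynomial (Fin n) ℝ}
    {p : Fin n → MvPolynomial (Fin n) ℝ} (hq : q.totalDegree ≤ m)
    (hp : ∀ j, (p j).totalDegree ≤ m) (i : Fin n) :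
    ∀ᵐ y : Fin n → ℝ, ∃ s : Finset ℝ, s.card ≤ (n * m + 1) ^ n ∧
      ∀ t, eval t q ≠ 0 → (∀ j, eval t (p j) = eval t q * y j) → t i ∈ s := by
  obtain ⟨R, hdeg, hR, hroot⟩ := exists_polynomial_relation hq hp (totalDegree_X (R := ℝ) i).le
  have hlead : (finSuccEquiv ℝ n R).leadingCoeff ≠ 0 := by simpa using hR
  filter_upwards [ae_eval_ne_zero hlead] with y hy
  have hmap : (finSuccEquiv ℝ n R).map (eval y) ≠ 0 := fun h => hy <| by
    simpa using congrArg (Polynomial.coeff · (finSuccEquiv ℝ n R).natDegree) h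
  refine ⟨((finSuccEquiv ℝ n R).map (eval y)).roots.toFinset, ?_, fun t hqt hyt => ?_⟩
  · calc _ ≤ ((finSuccEquiv ℝ n R).map (eval y)).natDegree :=
        (Multiset.toFinset_card_le _).trans (Polynomial.card_roots' _)
      _ ≤ degreeOf 0 R := Polynomial.natDegree_map_le.trans_eq (natDegree_finSuccEquiv R)
      _ ≤ (n * m + 1) ^ n :=
        degreeOf_le_iff.2 fun s hs => (mem_restrictDegree _ _ _).1 hdeg s hs 0
  · rw [Multiset.mem_toFinset, Polynomial.mem_roots hmap, Polynomial.IsRoot.def,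
      ← eval_eq_eval_mv_eval']
    simpa using hroot t y hqt hyt

lemma ae_encard_fiber_le {n m : ℕ} {q : MvPolynomial (Fin n) ℝ}
    {p : Fin n → MvPolynomial (Fin n) ℝ} (hq : q.totalDegree ≤ m)
    (hp : ∀ j, (p j).totalDegree ≤ m) :
    ∀ᵐ y : Fin n → ℝ,
      {t | eval t q ≠ 0 ∧ ∀ j, eval t (p j) = eval t q * y j}.encard ≤ fiberBound n m := by
  filter_upwards [ae_all_iff.2 (ae_exists_finset_coordinate_mem hq hp)] with y hy
  choose s hcard hs using hy
  calc _ ≤ (Fintype.piFinset s : Set (Fin n → ℝ)).encard :=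
        Set.encard_le_encard fun t ht => by simpa using fun i => hs i t ht.1 ht.2
    _ ≤ fiberBound n m := by
      rw [Set.encard_coe_eq_coe_finsetCard, Fintype.card_piFinset]
      exact_mod_cast (Finset.prod_le_prod' fun i _ => hcard i).trans_eq (by simp [fiberBound])

end Fibres

section Area

variable {E : Type*} [NormedAddCommGroup E] [NormedSpace ℝ E] [FiniteDimensional ℝ E]

lemma exists_injOn_of_approximatesLinearOn (A : E →L[ℝ] E) :
    ∃ r : NNReal, r ≠ 0 ∧ (A.det ≠ 0 →
      ∀ (g : E → E) (s : Set E), ApproximatesLinearOn g A s r → Set.InjOn g s) := by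
  by_cases hA : A.det = 0
  · exact ⟨1, one_ne_zero, fun h => absurd hA h⟩
  let B := A.toContinuousLinearEquivOfDetNeZero hA
  have hB : (B : E →L[ℝ] E) = A := A.coe_toContinuousLinearEquivOfDetNeZero hA
  rcases B.subsingleton_or_nnnorm_symm_pos with hsub | hpos
  · exact ⟨1, one_ne_zero, fun _ g s _ x _ y _ _ => Subsingleton.elim x y⟩
  · refine ⟨‖(B.symm : E →L[ℝ] E)‖₊⁻¹ / 2, by positivity, fun _ g s hgs => ?_⟩
    rw [← hB] at hgs
    exact hgs.injOn (Or.inr (half_lt_self (by positivity)))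

lemma tsum_indicator_image_le_encard_fiber {X Y : Type*} {g : X → Y} {P : ℕ → Set X}
    (hP : Pairwise (Function.onFun Disjoint P)) (y : Y) :
    ∑' k, (g '' P k).indicator (1 : Y → ENNReal) y ≤ ((⋃ k, P k) ∩ g ⁻¹' {y}).encard := by
  let _ : MeasurableSpace X := ⊤
  have hle : ∀ k, (g '' P k).indicator (1 : Y → ENNReal) y ≤
      Measure.count (P k ∩ g ⁻¹' {y}) := fun k => by
    refine Set.indicator_apply_le' (fun hy => ?_) fun _ => zero_le
    obtain ⟨x, hx, hxy⟩ := hy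
    calc (1 : ENNReal) = Measure.count {x} := (Measure.count_singleton x).symm
      _ ≤ Measure.count (P k ∩ g ⁻¹' {y}) :=
        measure_mono (Set.singleton_subset_iff.2 ⟨hx, hxy⟩)
  calc _ ≤ ∑' k, Measure.count (P k ∩ g ⁻¹' {y}) := ENNReal.tsum_le_tsum hle
    _ = Measure.count (⋃ k, P k ∩ g ⁻¹' {y}) := (measure_iUnion (fun i j hij =>
        (hP hij).mono Set.inter_subset_left Set.inter_subset_left) fun _ =>
        MeasurableSpace.measurableSet_top).symm
    _ = ((⋃ k, P k) ∩ g ⁻¹' {y}).encard := by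
      rw [← Set.iUnion_inter, Measure.count_apply MeasurableSpace.measurableSet_top]

variable [MeasurableSpace E] [BorelSpace E]

lemma exists_measurable_partition_injOn {g : E → E} {g' : E → E →L[ℝ] E} {S : Set E}
    (hS : MeasurableSet S) (hg : ∀ x ∈ S, HasFDerivWithinAt g (g' x) S x)
    (hdet : ∀ x ∈ S, (g' x).det ≠ 0) :
    ∃ P : ℕ → Set E, Pairwise (Function.onFun Disjoint P) ∧ (∀ k, MeasurableSet (P k)) ∧
      ⋃ k, P k = S ∧ ∀ k, Set.InjOn g (P k) := by
  rcases S.eq_empty_or_nonempty with rfl | hne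
  · exact ⟨fun _ => ∅, by simp [Pairwise, Function.onFun], by simp, by simp, by simp⟩
  choose r hr hinj using exists_injOn_of_approximatesLinearOn (E := E)
  obtain ⟨P, A, hdisj, hmeas, hcover, happrox, hA⟩ :=
    exists_partition_approximatesLinearOn_of_hasFDerivWithinAt g S g' hg r hr
  refine ⟨fun k => S ∩ P k, fun i j hij =>
    (hdisj hij).mono Set.inter_subset_right Set.inter_subset_right,
    fun k => hS.inter (hmeas k), ?_, fun k => ?_⟩
  · rw [← Set.inter_iUnion, Set.inter_eq_left.2 hcover]
  · obtain ⟨x, hx, hAx⟩ := hA hne k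
    exact hinj (A k) (hAx ▸ hdet x hx) g _ (happrox k)

lemma lintegral_abs_det_fderiv_le_of_det_ne_zero (μ : Measure E) [μ.IsAddHaarMeasure] {g : E → E}
    {g' : E → E →L[ℝ] E} {S Q : Set E} (hS : MeasurableSet S) (hQ : MeasurableSet Q)
    (hg : ∀ x ∈ S, HasFDerivWithinAt g (g' x) S x) (hdet : ∀ x ∈ S, (g' x).det ≠ 0)
    (hSQ : Set.MapsTo g S Q) {B : ℕ} (hB : ∀ᵐ y ∂μ, (S ∩ g ⁻¹' {y}).encard ≤ B) :
    ∫⁻ x in S, ENNReal.ofReal |(g' x).det| ∂μ ≤ B * μ Q := by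
  obtain ⟨P, hdisj, hmeas, rfl, hinj⟩ := exists_measurable_partition_injOn hS hg hdet
  have hderiv : ∀ k, ∀ x ∈ P k, HasFDerivWithinAt g (g' x) (P k) x := fun k x hx =>
    (hg x (Set.mem_iUnion_of_mem k hx)).mono (Set.subset_iUnion P k)
  have himage : ∀ k, MeasurableSet (g '' P k) := fun k =>
    measurable_image_of_fderivWithin (hmeas k) (hderiv k) (hinj k)
  calc ∫⁻ x in ⋃ k, P k, ENNReal.ofReal |(g' x).det| ∂μ
      = ∑' k, ∫⁻ x in P k, ENNReal.ofReal |(g' x).det| ∂μ := lintegral_iUnion hmeas hdisj _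
    _ = ∑' k, ∫⁻ y, (g '' P k).indicator 1 y ∂μ := by
      congr with k
      rw [lintegral_indicator_one (himage k),
        lintegral_abs_det_fderiv_eq_addHaar_image μ (hmeas k) (hderiv k) (hinj k)]
    _ = ∫⁻ y, ∑' k, (g '' P k).indicator 1 y ∂μ :=
      (lintegral_tsum fun k => (measurable_one.indicator (himage k)).aemeasurable).symm
    _ ≤ ∫⁻ y, Q.indicator (fun _ => (B : ENNReal)) y ∂μ := by
      refine lintegral_mono_ae (hB.mono fun y hy => ?_)
      by_cases hyQ : y ∈ Q
      · rw [Set.indicator_of_mem hyQ]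
        exact (tsum_indicator_image_le_encard_fiber hdisj y).trans
          (by simpa using ENat.toENNReal_mono hy)
      · refine (ENNReal.tsum_eq_zero.2 fun k => Set.indicator_of_notMem ?_ _).trans_le zero_le
        rintro ⟨x, hx, rfl⟩
        exact hyQ (hSQ (Set.mem_iUnion_of_mem k hx))
    _ = B * μ Q := by rw [lintegral_indicator hQ, setLIntegral_const]

lemma lintegral_abs_det_fderiv_le (μ : Measure E) [μ.IsAddHaarMeasure] {g : E → E}
    {g' : E → E →L[ℝ] E} {S Q : Set E} (hS : MeasurableSet S) (hQ : MeasurableSet Q)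
    (hg : ∀ x ∈ S, HasFDerivWithinAt g (g' x) S x) (hdet : Measurable fun x => (g' x).det)
    (hSQ : Set.MapsTo g S Q) {B : ℕ} (hB : ∀ᵐ y ∂μ, (S ∩ g ⁻¹' {y}).encard ≤ B) :
    ∫⁻ x in S, ENNReal.ofReal |(g' x).det| ∂μ ≤ B * μ Q := by
  let U := {x | (g' x).det ≠ 0}
  have hU : MeasurableSet U := hdet (measurableSet_singleton (0 : ℝ)).compl
  have hSU : S ∩ U ⊆ S := Set.inter_subset_left
  calc _ = ∫⁻ x in S, U.indicator (fun x => ENNReal.ofReal |(g' x).det|) x ∂μ := by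
        congr with x
        by_cases hx : (g' x).det = 0 <;> simp [U, hx]
    _ = ∫⁻ x in S ∩ U, ENNReal.ofReal |(g' x).det| ∂μ := by
      rw [lintegral_indicator hU, Measure.restrict_restrict hU, Set.inter_comm]
    _ ≤ B * μ Q := lintegral_abs_det_fderiv_le_of_det_ne_zero μ (hS.inter hU) hQ
      (fun x hx => (hg x hx.1).mono hSU) (fun x hx => hx.2) (hSQ.mono_left hSU)
      (hB.mono fun y hy =>
        (Set.encard_le_encard (Set.inter_subset_inter_left _ hSU)).trans hy)

end Area

section Anticoncentration

variable {V : Type*} [NormedAddCommGroup V] [InnerProductSpace ℝ V] [MeasurableSpace V]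

lemma gaussianReal_le_volume_div_two (s : Set ℝ) : gaussianReal 0 1 s ≤ volume s / 2 := by
  have hpdf : ∀ x, gaussianPDF 0 1 x ≤ 2⁻¹ := fun x => by
    have hsqrt : (2 : ℝ) ≤ √(2 * Real.pi * (1 : NNReal)) :=
      Real.le_sqrt_of_sq_le (by norm_num; linarith [Real.pi_gt_three])
    have hexp : Real.exp (-(x - 0) ^ 2 / (2 * (1 : NNReal))) ≤ 1 :=
      Real.exp_le_one_iff.2 (div_nonpos_of_nonpos_of_nonneg (by nlinarith) (by positivity))
    rw [gaussianPDF, ← ENNReal.ofReal_ofNat 2, ← ENNReal.ofReal_inv_of_pos two_pos]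
    refine ENNReal.ofReal_le_ofReal ?_
    calc _ ≤ (2 : ℝ)⁻¹ * 1 :=
        mul_le_mul (inv_anti₀ two_pos hsqrt) hexp (Real.exp_nonneg _) (by norm_num)
      _ = 2⁻¹ := mul_one _
  rw [gaussianReal_apply 0 one_ne_zero]
  calc _ ≤ ∫⁻ _ in s, 2⁻¹ := lintegral_mono hpdf
    _ = volume s / 2 := by rw [setLIntegral_const, mul_comm, div_eq_mul_inv]

variable [BorelSpace V] [FiniteDimensional ℝ V]

lemma stdGaussian_le_abs_inner_le (z : V) {c : ℝ} (hc : 0 < c) :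
    ProbabilityTheory.stdGaussian V {v | c ≤ |inner ℝ v z|} ≤
      ENNReal.ofReal (‖z‖ ^ 2 / c ^ 2) := by
  have hmean := integral_strongDual_stdGaussian (innerSL ℝ z)
  have hvar := variance_dual_stdGaussian (innerSL ℝ z)
  have hcheb := meas_ge_le_variance_div_sq
    (IsGaussian.memLp_dual (ProbabilityTheory.stdGaussian V) (innerSL ℝ z) 2 (by simp)) hc
  rw [hmean, hvar, innerSL_apply_norm] at hcheb
  simpa [real_inner_comm] using hcheb

lemma stdGaussian_real_lt_abs_inner_le {f : V} {ε : ℝ} (hf : ‖f‖ ≤ ε) :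
    (ProbabilityTheory.stdGaussian V).real {v | 2 * ε < |inner ℝ v f|} ≤ 1 / 4 := by
  obtain rfl | hε := eq_or_lt_of_le ((norm_nonneg f).trans hf)
  · simp [norm_le_zero_iff.1 hf]
  have hratio : ‖f‖ ^ 2 / (2 * ε) ^ 2 ≤ 1 / 4 := by
    rw [div_le_iff₀ (by positivity)]
    nlinarith [norm_nonneg f]
  refine ENNReal.toReal_le_of_le_ofReal (by norm_num) ?_
  calc _ ≤ ProbabilityTheory.stdGaussian V {v | 2 * ε ≤ |inner ℝ v f|} :=
        measure_mono (Set.ofPred_subset_ofPred.2 fun v hv => le_of_lt hv)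
    _ ≤ _ := stdGaussian_le_abs_inner_le f (by positivity)
    _ ≤ _ := ENNReal.ofReal_le_ofReal hratio

lemma map_inner_stdGaussian {e : V} (he : ‖e‖ = 1) :
    (ProbabilityTheory.stdGaussian V).map (fun v => inner ℝ v e) = gaussianReal 0 1 := by
  have h := IsGaussian.map_eq_gaussianReal (μ := ProbabilityTheory.stdGaussian V) (innerSL ℝ e)
  rw [integral_strongDual_stdGaussian, variance_dual_stdGaussian, innerSL_apply_norm, he] at h
  simpa [real_inner_comm] using h

lemma stdGaussian_abs_inner_lt_le (z : V) :
    ProbabilityTheory.stdGaussian V {v | |inner ℝ v z| < ‖z‖ / 2} ≤ 1 / 2 := by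
  rcases eq_or_ne z 0 with rfl | hz
  · simp
  have hpos : 0 < ‖z‖ := norm_pos_iff.2 hz
  have hunit : ‖‖z‖⁻¹ • z‖ = 1 := by simp [norm_smul, hpos.ne']
  have hset : {v : V | |inner ℝ v z| < ‖z‖ / 2} =
      (fun v => inner ℝ v (‖z‖⁻¹ • z)) ⁻¹' Set.Ioo (-(1 / 2)) (1 / 2) := by
    ext v
    rw [Set.mem_preimage, Set.mem_Ioo, ← abs_lt, inner_smul_right, abs_mul, abs_inv, abs_norm,
      inv_mul_lt_iff₀ hpos, mul_one_div, Set.mem_ofPred_eq]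
  rw [hset, ← Measure.map_apply (by fun_prop) measurableSet_Ioo, map_inner_stdGaussian hunit]
  refine (gaussianReal_le_volume_div_two _).trans_eq ?_
  norm_num [Real.volume_Ioo]

lemma le_lintegral_abs_inner_stdGaussian_restrict {f : V} {ε : ℝ} (hf : ‖f‖ ≤ ε) (z : V) :
    ENNReal.ofReal (1 / 8 * ‖z‖) ≤ ∫⁻ v, ENNReal.ofReal |inner ℝ v z|
      ∂(ProbabilityTheory.stdGaussian V).restrict {v | |inner ℝ v f| ≤ 2 * ε} := by
  set γ := ProbabilityTheory.stdGaussian V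
  set A := {v : V | |inner ℝ v f| ≤ 2 * ε}
  set B := {v : V | ‖z‖ / 2 ≤ |inner ℝ v z|}
  have hA : MeasurableSet A := measurableSet_le (by fun_prop) measurable_const
  have hB : MeasurableSet B := measurableSet_le measurable_const (by fun_prop)
  have hAc : γ.real Aᶜ ≤ 1 / 4 := by
    have hAc' : Aᶜ = {v | 2 * ε < |inner ℝ v f|} := by ext; simp [A]
    rw [hAc']
    exact stdGaussian_real_lt_abs_inner_le hf
  have hBc : γ.real Bᶜ ≤ 1 / 2 := by
    refine ENNReal.toReal_le_of_le_ofReal (by norm_num) ?_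
    have hBc' : Bᶜ = {v | |inner ℝ v z| < ‖z‖ / 2} := by ext; simp [B]
    rw [hBc']
    exact (stdGaussian_abs_inner_lt_le z).trans_eq (by norm_num [ENNReal.ofReal_div_of_pos])
  have hBA : 1 / 4 ≤ γ.real (B ∩ A) := by
    have hunion := measureReal_union_le (μ := γ) Bᶜ Aᶜ
    rw [← Set.compl_inter, probReal_compl_eq_one_sub (hB.inter hA)] at hunion
    linarith
  calc ENNReal.ofReal (1 / 8 * ‖z‖) = ENNReal.ofReal (‖z‖ / 2) * ENNReal.ofReal (1 / 4) := by
        rw [← ENNReal.ofReal_mul (by positivity)]; congr 1; ring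
    _ ≤ ENNReal.ofReal (‖z‖ / 2) * γ.restrict A B := by
      rw [Measure.restrict_apply hB, ← ofReal_measureReal]
      gcongr
    _ ≤ ENNReal.ofReal (‖z‖ / 2) *
        γ.restrict A {v | ENNReal.ofReal (‖z‖ / 2) ≤ ENNReal.ofReal |inner ℝ v z|} := by
      gcongr
      exact fun v hv => ENNReal.ofReal_le_ofReal hv
    _ ≤ _ := mul_meas_ge_le_lintegral (by fun_prop) _

end Anticoncentration

section RandomDeterminant

lemma lintegral_pi_fin_succ {W : Type*} [MeasurableSpace W] (ρ : Measure W) [SigmaFinite ρ] {n : ℕ}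
    {f : W × (Fin n → W) → ENNReal} (hf : Measurable f) :
    ∫⁻ x, f (x 0, fun j => x j.succ) ∂Measure.pi (fun _ : Fin (n + 1) => ρ) =
      ∫⁻ v, ∫⁻ w, f (w, v) ∂ρ ∂Measure.pi fun _ => ρ :=
  ((measurePreserving_piFinSuccAbove (fun _ : Fin (n + 1) => ρ) 0).lintegral_comp hf).trans
    (lintegral_prod_symm' f hf)

variable {V : Type*} [NormedAddCommGroup V] [InnerProductSpace ℝ V] {n : ℕ}

/-- The matrix of scalar products of two families; `Matrix.gram` is the case `v = u`. -/
noncomputable def innerMatrix (v u : Fin n → V) : Matrix (Fin n) (Fin n) ℝ :=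
  Matrix.of fun j i => inner ℝ (v j) (u i)

lemma det_innerMatrix_succ (v u : Fin (n + 1) → V) :
    (innerMatrix v u).det = inner ℝ (v 0) (∑ i : Fin (n + 1), ((-1) ^ (i : ℕ) *
      (innerMatrix (fun j => v j.succ) (fun k => u (i.succAbove k))).det) • u i) := by
  rw [Matrix.det_succ_row_zero, inner_sum]
  refine Finset.sum_congr rfl fun i _ => ?_
  rw [inner_smul_right, mul_right_comm]
  rfl

lemma continuous_det_innerMatrix :
    Continuous fun w : (Fin n → V) × (Fin n → V) => (innerMatrix w.1 w.2).det :=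
  Continuous.matrix_det <| continuous_matrix fun j i => by
    simp only [innerMatrix, Matrix.of_apply]
    fun_prop

variable [MeasurableSpace V] [BorelSpace V] [SecondCountableTopology V]

lemma measurable_det_innerMatrix (u : Fin n → V) :
    Measurable fun v : Fin n → V => (innerMatrix v u).det :=
  (continuous_det_innerMatrix.comp (Continuous.prodMk continuous_id continuous_const)).measurable

lemma pow_le_lintegral_abs_det_innerMatrix {ρ : Measure V} [SigmaFinite ρ] {κ τ : ℝ} (hκ : 0 ≤ κ)
    (hτ : 0 ≤ τ)
    (hρ : ∀ z, ENNReal.ofReal (κ * ‖z‖) ≤ ∫⁻ v, ENNReal.ofReal |inner ℝ v z| ∂ρ)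
    {u : Fin n → V} (hu : ∀ (b : Fin n → ℝ) (i : Fin n), τ * |b i| ≤ ‖∑ i, b i • u i‖) :
    ENNReal.ofReal (κ * τ) ^ n ≤
      ∫⁻ v, ENNReal.ofReal |(innerMatrix v u).det| ∂Measure.pi fun _ : Fin n => ρ := by
  induction n with
  | zero => simp
  | succ n ih =>
    let D (i : Fin (n + 1)) (v : Fin n → V) : ℝ :=
      (innerMatrix v fun k => u (i.succAbove k)).det
    let z (v : Fin n → V) : V := ∑ i : Fin (n + 1), ((-1) ^ (i : ℕ) * D i v) • u i
    have hz : Measurable z := Finset.measurable_sum _ fun i _ =>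
      ((measurable_det_innerMatrix fun k => u (i.succAbove k)).const_mul _).smul_const _
    -- `z v` is the vector of cofactors of the first row, and its coefficient on `u 0` is `D 0 v`.
    have hD : ∀ v, ENNReal.ofReal (κ * τ) * ENNReal.ofReal |D 0 v| ≤
        ∫⁻ w, ENNReal.ofReal |inner ℝ w (z v)| ∂ρ := fun v => by
      rw [← ENNReal.ofReal_mul (mul_nonneg hκ hτ)]
      refine (ENNReal.ofReal_le_ofReal ?_).trans (hρ (z v))
      rw [mul_assoc]
      exact mul_le_mul_of_nonneg_left
        (by simpa using hu (fun i => (-1) ^ (i : ℕ) * D i v) 0) hκ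
    have hu' : ∀ (b : Fin n → ℝ) i, τ * |b i| ≤ ‖∑ i, b i • u i.succ‖ := fun b i => by
      simpa [Fin.sum_univ_succ] using hu (Fin.cons 0 b) i.succ
    calc ENNReal.ofReal (κ * τ) ^ (n + 1)
        ≤ ENNReal.ofReal (κ * τ) * ∫⁻ v, ENNReal.ofReal |D 0 v| ∂Measure.pi fun _ => ρ := by
          rw [pow_succ']
          gcongr
          exact ih hu'
      _ = ∫⁻ v, ENNReal.ofReal (κ * τ) * ENNReal.ofReal |D 0 v| ∂Measure.pi fun _ => ρ :=
        (lintegral_const_mul _ (measurable_det_innerMatrix _).abs.ennreal_ofReal).symm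
      _ ≤ ∫⁻ v, ∫⁻ w, ENNReal.ofReal |inner ℝ w (z v)| ∂ρ ∂Measure.pi fun _ => ρ :=
        lintegral_mono hD
      _ = ∫⁻ v, ENNReal.ofReal |inner ℝ (v 0) (z fun j => v j.succ)| ∂Measure.pi fun _ => ρ :=
        (lintegral_pi_fin_succ ρ (f := fun p => ENNReal.ofReal |inner ℝ p.1 (z p.2)|)
          (by fun_prop)).symm
      _ = _ := by
        congr with v
        rw [det_innerMatrix_succ]

end RandomDeterminant

section RationalMap

open MvPolynomial

variable {V : Type*} [NormedAddCommGroup V] [InnerProductSpace ℝ V] {n m : ℕ}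
  {q : MvPolynomial (Fin n) ℝ} {f : (Fin n → ℝ) → V} {f' : (Fin n → ℝ) → (Fin n → ℝ) →L[ℝ] V}

lemma setLIntegral_abs_det_innerMatrix_le (hq : q.totalDegree ≤ m) (hq0 : ∀ t, eval t q ≠ 0)
    (hrat : ∀ v : V, ∃ p : MvPolynomial (Fin n) ℝ, p.totalDegree ≤ m ∧
      ∀ t, eval t p = eval t q * inner ℝ v (f t))
    (hf : ∀ t, HasFDerivAt f (f' t) t) (hf' : Continuous f') (v : Fin n → V)
    {S : Set (Fin n → ℝ)} (hS : MeasurableSet S) {δ : ℝ}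
    (hδ : ∀ t ∈ S, ∀ j, |inner ℝ (v j) (f t)| ≤ δ) :
    ∫⁻ t in S, ENNReal.ofReal |(innerMatrix v fun i => f' t (Pi.single i 1)).det| ≤
      fiberBound n m * ENNReal.ofReal (2 * δ) ^ n := by
  choose p hpdeg hp using fun j => hrat (v j)
  let g (t : Fin n → ℝ) : Fin n → ℝ := fun j => inner ℝ (v j) (f t)
  let g' (t : Fin n → ℝ) : (Fin n → ℝ) →L[ℝ] Fin n → ℝ :=
    ContinuousLinearMap.pi fun j => (innerSL ℝ (v j)).comp (f' t)
  have hg : ∀ t, HasFDerivAt g (g' t) t := fun t =>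
    hasFDerivAt_pi.2 fun j => (innerSL ℝ (v j)).hasFDerivAt.comp t (hf t)
  have hdet : ∀ t, (g' t).det = (innerMatrix v fun i => f' t (Pi.single i 1)).det := fun t => by
    rw [ContinuousLinearMap.det, ← LinearMap.det_toMatrix']
    rfl
  have hdetm : Measurable fun t => (g' t).det := by
    simp_rw [hdet]
    exact (continuous_det_innerMatrix.comp (by fun_prop :
      Continuous fun t => (v, fun i => f' t (Pi.single i 1)))).measurable
  have hvol : volume (Set.Icc (fun _ : Fin n => -δ) fun _ => δ) = ENNReal.ofReal (2 * δ) ^ n := by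
    simp [Real.volume_Icc_pi, two_mul]
  simp_rw [← hdet, ← hvol]
  refine lintegral_abs_det_fderiv_le volume hS measurableSet_Icc
    (fun t _ => (hg t).hasFDerivWithinAt) hdetm
    (fun t ht => ⟨fun j => (abs_le.1 (hδ t ht j)).1, fun j => (abs_le.1 (hδ t ht j)).2⟩) ?_
  filter_upwards [ae_encard_fiber_le hq hpdeg] with y hy
  refine (Set.encard_le_encard ?_).trans hy
  rintro t ⟨-, rfl⟩
  exact ⟨hq0 t, fun j => hp j t⟩

lemma setLIntegral_lintegral_pi_restrict {T W ι : Type*} [MeasurableSpace T] [MeasurableSpace W]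
    [Fintype ι] (μ : Measure T) [SFinite μ] (ρ : Measure W) [SigmaFinite ρ] {S : Set T}
    {A : T → Set W} (hA : MeasurableSet {p : T × (ι → W) | ∀ j, p.2 j ∈ A p.1})
    {D : T × (ι → W) → ENNReal} (hD : Measurable D) :
    ∫⁻ t in S, ∫⁻ v, D (t, v) ∂(Measure.pi fun _ : ι => ρ.restrict (A t)) ∂μ =
      ∫⁻ v, ∫⁻ t in {t | ∀ j, v j ∈ A t} ∩ S, D (t, v) ∂μ ∂Measure.pi fun _ => ρ := by
  set 𝒜 := {p : T × (ι → W) | ∀ j, p.2 j ∈ A p.1}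
  calc _ = ∫⁻ t in S, ∫⁻ v, 𝒜.indicator D (t, v) ∂(Measure.pi fun _ => ρ) ∂μ := by
        refine lintegral_congr fun t => ?_
        have hslice : Prod.mk t ⁻¹' 𝒜 = Set.univ.pi fun _ : ι => A t := by
          ext v
          simp [𝒜]
        rw [← Measure.restrict_pi_pi, ← hslice,
          ← lintegral_indicator (measurable_prodMk_left hA)]
        exact lintegral_congr fun v => rfl
    _ = ∫⁻ v, ∫⁻ t in S, 𝒜.indicator D (t, v) ∂μ ∂Measure.pi fun _ => ρ :=
      lintegral_lintegral_swap (f := fun t v => 𝒜.indicator D (t, v))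
        (hD.indicator hA).aemeasurable
    _ = _ := lintegral_congr fun v =>
      setLIntegral_indicator (measurable_prodMk_right (y := v) hA) fun t => D (t, v)

variable [FiniteDimensional ℝ V]

lemma volume_small_value_large_derivative_le (hq : q.totalDegree ≤ m) (hq0 : ∀ t, eval t q ≠ 0)
    (hrat : ∀ v : V, ∃ p : MvPolynomial (Fin n) ℝ, p.totalDegree ≤ m ∧
      ∀ t, eval t p = eval t q * inner ℝ v (f t))
    (hf : ∀ t, HasFDerivAt f (f' t) t) (hf' : Continuous f')
    {S : Set (Fin n → ℝ)} (hS : MeasurableSet S) {ε τ : ℝ} (hτ : 0 ≤ τ)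
    (hsmall : ∀ t ∈ S, ‖f t‖ ≤ ε) (hlarge : ∀ t ∈ S, ∀ b i, τ * |b i| ≤ ‖f' t b‖) :
    ENNReal.ofReal (1 / 8 * τ) ^ n * volume S ≤ fiberBound n m * ENNReal.ofReal (4 * ε) ^ n := by
  borelize V
  have hfc : Continuous f := continuous_iff_continuousAt.2 fun t => (hf t).continuousAt
  let γ := ProbabilityTheory.stdGaussian V
  let A (t : Fin n → ℝ) : Set V := {w | |inner ℝ w (f t)| ≤ 2 * ε}
  let D (p : (Fin n → ℝ) × (Fin n → V)) : ENNReal :=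
    ENNReal.ofReal |(innerMatrix p.2 fun i => f' p.1 (Pi.single i 1)).det|
  have hA : MeasurableSet {p : (Fin n → ℝ) × (Fin n → V) | ∀ j, p.2 j ∈ A p.1} := by
    simp only [A, Set.mem_ofPred_eq, Set.ofPred_forall]
    exact MeasurableSet.iInter fun j => (isClosed_le (by fun_prop) continuous_const).measurableSet
  have hD : Measurable D := (continuous_det_innerMatrix.comp (by fun_prop :
    Continuous fun p : (Fin n → ℝ) × (Fin n → V) =>
      (p.2, fun i => f' p.1 (Pi.single i 1)))).abs.measurable.ennreal_ofReal
  have hlin : ∀ t b, f' t b = ∑ i, b i • f' t (Pi.single i 1) := fun t b => by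
    conv_lhs => rw [pi_eq_sum_univ' b]
    simp
  calc _ = ∫⁻ _ in S, ENNReal.ofReal (1 / 8 * τ) ^ n := (setLIntegral_const _ _).symm
    _ ≤ ∫⁻ t in S, ∫⁻ v, D (t, v) ∂Measure.pi fun _ : Fin n => γ.restrict (A t) :=
      setLIntegral_mono' hS fun t ht => pow_le_lintegral_abs_det_innerMatrix (by norm_num) hτ
        (le_lintegral_abs_inner_stdGaussian_restrict (hsmall t ht))
        fun b i => (hlarge t ht b i).trans_eq (congrArg norm (hlin t b))
    _ = ∫⁻ v, ∫⁻ t in {t | ∀ j, v j ∈ A t} ∩ S, D (t, v) ∂volume ∂Measure.pi fun _ => γ :=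
      setLIntegral_lintegral_pi_restrict volume γ hA hD
    _ ≤ ∫⁻ _, fiberBound n m * ENNReal.ofReal (2 * (2 * ε)) ^ n ∂Measure.pi fun _ => γ :=
      lintegral_mono fun v => setLIntegral_abs_det_innerMatrix_le hq hq0 hrat hf hf' v
        ((measurable_prodMk_right (y := v) hA).inter hS) fun t ht => ht.1
    _ = _ := by
      rw [lintegral_const, measure_univ, mul_one, ← mul_assoc 2, two_mul 2, two_add_two_eq_four]

end RationalMap

section Stereographic

open Matrix

variable {V : Type*} [NormedAddCommGroup V] [InnerProductSpace ℝ V] {n : ℕ}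

lemma sum_norm_sq_smul_add_smul {κ : Type*} [Fintype κ] {a b : κ → ℝ} (ha : a ⬝ᵥ a = 1)
    (hb : b ⬝ᵥ b = 1) (hab : a ⬝ᵥ b = 0) (u w : V) :
    ∑ j, ‖a j • u + b j • w‖ ^ 2 = ‖u‖ ^ 2 + ‖w‖ ^ 2 := by
  have hj : ∀ j, ‖a j • u + b j • w‖ ^ 2 =
      a j * a j * ‖u‖ ^ 2 + a j * b j * (2 * inner ℝ u w) + b j * b j * ‖w‖ ^ 2 := fun j => by
    rw [norm_add_sq_real, norm_smul, norm_smul, real_inner_smul_left, real_inner_smul_right,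
      mul_pow, mul_pow, Real.norm_eq_abs, Real.norm_eq_abs, sq_abs, sq_abs]
    ring
  rw [dotProduct] at ha hb hab
  simp only [hj, Finset.sum_add_distrib, ← Finset.sum_mul, ha, hb, hab]
  ring

variable [FiniteDimensional ℝ V] [MeasurableSpace V] [BorelSpace V]

lemma map_sum_smul_stdGaussian {κ : Type*} [Fintype κ] {a b : κ → ℝ} (ha : a ⬝ᵥ a = 1)
    (hb : b ⬝ᵥ b = 1) (hab : a ⬝ᵥ b = 0) :
    (Measure.pi fun _ : κ => ProbabilityTheory.stdGaussian V).map
        (fun X => (∑ j, a j • X j, ∑ j, b j • X j)) =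
      (ProbabilityTheory.stdGaussian V).prod (ProbabilityTheory.stdGaussian V) := by
  classical
  let Φ : (κ → V) →L[ℝ] V × V :=
    (∑ j, a j • ContinuousLinearMap.proj j).prod (∑ j, b j • ContinuousLinearMap.proj j)
  have hΦ : (fun X : κ → V => (∑ j, a j • X j, ∑ j, b j • X j)) = Φ := by
    ext X <;> simp [Φ, _root_.sum_apply]
  rw [hΦ]
  refine Measure.ext_of_charFunDual (funext fun L => ?_)
  obtain ⟨u, hu⟩ := (InnerProductSpace.toDual ℝ V).surjective (L.comp (.inl ℝ V V))
  obtain ⟨w, hw⟩ := (InnerProductSpace.toDual ℝ V).surjective (L.comp (.inr ℝ V V))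
  have hL : ∀ j, (L.comp Φ).comp (.single ℝ (fun _ => V) j) =
      InnerProductSpace.toDual ℝ V (a j • u + b j • w) := fun j => by
    ext x
    have hx : Φ (Pi.single j x) = ContinuousLinearMap.inl ℝ V V (a j • x) +
        ContinuousLinearMap.inr ℝ V V (b j • x) := by
      simp [← hΦ, Pi.single_apply]
    calc L (Φ (Pi.single j x)) = inner ℝ u (a j • x) + inner ℝ w (b j • x) := by
          rw [hx, map_add, ← InnerProductSpace.toDual_apply_apply, hu,
            ← InnerProductSpace.toDual_apply_apply, hw]
          rfl
      _ = inner ℝ (a j • u + b j • w) x := by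
          simp only [inner_add_left, real_inner_smul_left, real_inner_smul_right]
  rw [charFunDual_map, charFunDual_pi, charFunDual_prod, ← hu, ← hw]
  simp only [hL, charFunDual_stdGaussian, LinearIsometryEquiv.norm_map]
  rw [← Complex.exp_sum, ← Complex.exp_add, ← Finset.sum_div, ← add_div, Finset.sum_neg_distrib,
    ← neg_add]
  norm_cast
  rw [sum_norm_sq_smul_add_smul ha hb hab]

/-- The inverse stereographic projection of `ℝⁿ` onto the unit sphere of `ℝⁿ⁺¹`, with the pole
`(-1, 0, …, 0)`; it parametrizes the sphere rationally. -/
noncomputable def stereo (t : Fin n → ℝ) : Fin (n + 1) → ℝ :=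
  (2 / (1 + t ⬝ᵥ t)) • vecCons 1 t - Pi.single 0 1

/-- The derivative of `stereo` at `t`, normalized to be an isometry onto its image. -/
noncomputable def stereoFrame (t : Fin n → ℝ) : (Fin n → ℝ) →L[ℝ] Fin (n + 1) → ℝ :=
  LinearMap.toContinuousLinearMap
    { toFun b := vecCons 0 b - (2 / (1 + t ⬝ᵥ t) * (t ⬝ᵥ b)) • vecCons 1 t
      map_add' b c := by ext j; refine Fin.cases ?_ (fun j => ?_) j <;> simp <;> ring
      map_smul' r b := by ext j; refine Fin.cases ?_ (fun j => ?_) j <;> simp <;> ring }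

lemma one_add_dotProduct_self_pos (t : Fin n → ℝ) : 0 < 1 + t ⬝ᵥ t :=
  add_pos_of_pos_of_nonneg one_pos (Finset.sum_nonneg fun i _ => mul_self_nonneg (t i))

lemma stereoFrame_apply (t b : Fin n → ℝ) :
    stereoFrame t b = vecCons 0 b - (2 / (1 + t ⬝ᵥ t) * (t ⬝ᵥ b)) • vecCons 1 t :=
  rfl

lemma stereo_dotProduct_self (t : Fin n → ℝ) : stereo t ⬝ᵥ stereo t = 1 := by
  have ht := (one_add_dotProduct_self_pos t).ne'
  simp only [stereo, sub_dotProduct, dotProduct_sub, smul_dotProduct, dotProduct_smul,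
    cons_dotProduct_cons, single_one_dotProduct, dotProduct_single_one, cons_val_zero,
    Pi.sub_apply, Pi.smul_apply, Pi.single_eq_same, smul_eq_mul]
  field_simp
  ring

lemma stereoFrame_dotProduct_self (t b : Fin n → ℝ) :
    stereoFrame t b ⬝ᵥ stereoFrame t b = b ⬝ᵥ b := by
  have ht := (one_add_dotProduct_self_pos t).ne'
  simp only [stereoFrame_apply, sub_dotProduct, dotProduct_sub, smul_dotProduct, dotProduct_smul,
    cons_dotProduct_cons, smul_eq_mul, dotProduct_comm b t]
  field_simp
  ring

lemma stereo_dotProduct_stereoFrame (t b : Fin n → ℝ) : stereo t ⬝ᵥ stereoFrame t b = 0 := by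
  have ht := (one_add_dotProduct_self_pos t).ne'
  simp only [stereo, stereoFrame_apply, sub_dotProduct, dotProduct_sub, smul_dotProduct,
    dotProduct_smul, cons_dotProduct_cons, single_one_dotProduct, cons_val_zero, smul_eq_mul]
  field_simp
  ring

lemma continuous_stereo : Continuous (stereo (n := n)) := by
  have ht := fun t : Fin n → ℝ => (one_add_dotProduct_self_pos t).ne'
  unfold stereo
  fun_prop (disch := exact ht _)

lemma continuous_stereoFrame : Continuous (stereoFrame (n := n)) := by
  have ht := fun t : Fin n → ℝ => (one_add_dotProduct_self_pos t).ne'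
  refine continuous_clm_apply.2 fun b => ?_
  simp only [stereoFrame_apply]
  fun_prop (disch := exact ht _)

lemma hasFDerivAt_stereo (t : Fin n → ℝ) :
    HasFDerivAt stereo ((2 / (1 + t ⬝ᵥ t)) • stereoFrame t) t := by
  have ht := (one_add_dotProduct_self_pos t).ne'
  let π (i : Fin n) : (Fin n → ℝ) →L[ℝ] ℝ := .proj i
  have hdot : HasFDerivAt (fun s : Fin n → ℝ => 1 + s ⬝ᵥ s) (∑ i, (2 * t i) • π i) t := by
    refine ((HasFDerivAt.fun_sum (u := Finset.univ) fun i _ =>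
      (π i).hasFDerivAt.mul (π i).hasFDerivAt).const_add 1).congr_fderiv ?_
    simp only [two_mul, add_smul]
    rfl
  have hcons : HasFDerivAt (fun s : Fin n → ℝ => (vecCons 1 s : Fin (n + 1) → ℝ))
      (.pi (Fin.cons 0 π)) t :=
    hasFDerivAt_pi.2 <| Fin.cases (hasFDerivAt_const _ _) fun j => (π j).hasFDerivAt
  have h := ((((hasDerivAt_inv ht).comp_hasFDerivAt t hdot).const_mul 2).smul hcons).sub_const
    (Pi.single 0 1)
  refine h.congr_fderiv (ContinuousLinearMap.ext fun b => ?_)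
  have hdot_apply : (∑ i, (2 * t i) • π i) b = 2 * (t ⬝ᵥ b) := by
    simp [π, _root_.sum_apply, dotProduct, Finset.mul_sum, mul_assoc]
  have hcons_apply : (ContinuousLinearMap.pi (Fin.cons 0 π) : _ →L[ℝ] Fin (n + 1) → ℝ) b =
      vecCons 0 b := by
    ext j
    refine Fin.cases rfl (fun _ => rfl) j
  simp only [_root_.add_apply, _root_.smul_apply, ContinuousLinearMap.smulRight_apply, hdot_apply,
    hcons_apply, stereoFrame_apply, Function.comp_apply]
  match_scalars
  · field_simp
  · rw [smul_eq_mul, smul_eq_mul]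
    field_simp

end Stereographic

section PolynomialMap

open MvPolynomial

variable {σ : Type*} {n k d m : ℕ}

lemma totalDegree_pderiv_le (p : MvPolynomial σ ℝ) (i : σ) :
    (pderiv i p).totalDegree ≤ p.totalDegree := by
  conv_lhs => rw [← p.support_sum_monomial_coeff, map_sum]
  refine totalDegree_finsetSum_le fun s hs => ?_
  rw [pderiv_monomial]
  refine (totalDegree_monomial_le _ _).trans (le_trans ?_ (le_totalDegree hs))
  exact Finsupp.degree_mono tsub_le_self

lemma exists_eval_eq_pow_mul_eval {τ : Type*} {q : MvPolynomial τ ℝ} (hq : q.totalDegree ≤ m)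
    {p : σ → MvPolynomial τ ℝ} (hp : ∀ i, (p i).totalDegree ≤ m) {r : MvPolynomial σ ℝ}
    (hr : r.totalDegree ≤ d) :
    ∃ R : MvPolynomial τ ℝ, R.totalDegree ≤ d * m ∧ ∀ t x,
      (∀ i, eval t (p i) = eval t q * x i) → eval t R = eval t q ^ d * eval x r := by
  have hdeg : ∀ s ∈ r.support, s.degree ≤ d := fun s hs => (le_totalDegree hs).trans hr
  refine ⟨∑ s ∈ r.support, r.coeff s • (q ^ (d - s.degree) * s.prod fun i e => p i ^ e),
    totalDegree_finsetSum_le fun s hs => (totalDegree_smul_le _ _).trans ?_, fun t x hx => ?_⟩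
  · have hpow : (q ^ (d - s.degree)).totalDegree ≤ (d - s.degree) * m :=
      (totalDegree_pow _ _).trans (Nat.mul_le_mul_left _ hq)
    have hprod : (s.prod fun i e => p i ^ e).totalDegree ≤ s.degree * m := by
      refine (totalDegree_finsetProd _ _).trans ?_
      rw [Finsupp.degree_apply, Finset.sum_mul]
      exact Finset.sum_le_sum fun i _ =>
        (totalDegree_pow _ _).trans (Nat.mul_le_mul_left _ (hp i))
    calc _ ≤ (d - s.degree) * m + s.degree * m :=
          (totalDegree_mul _ _).trans (add_le_add hpow hprod)
      _ = d * m := by rw [← add_mul, Nat.sub_add_cancel (hdeg s hs)]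
  · rw [map_sum, eval_eq x r, Finset.mul_sum]
    refine Finset.sum_congr rfl fun s hs => ?_
    have hprod : eval t (s.prod fun i e => p i ^ e) =
        eval t q ^ s.degree * ∏ i ∈ s.support, x i ^ s i := by
      simp only [Finsupp.prod, map_prod, map_pow, hx, mul_pow, Finset.prod_mul_distrib,
        Finset.prod_pow_eq_pow_sum, Finsupp.degree_apply]
    rw [smul_eval, map_mul, map_pow, hprod, ← mul_assoc (eval t q ^ _), ← pow_add,
      Nat.sub_add_cancel (hdeg s hs)]
    ring

lemma hasFDerivAt_eval (p : MvPolynomial (Fin n) ℝ) (x : EuclideanSpace ℝ (Fin n)) :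
    HasFDerivAt (fun x : EuclideanSpace ℝ (Fin n) => eval x p)
      (∑ j, eval x (pderiv j p) • (EuclideanSpace.proj j : EuclideanSpace ℝ (Fin n) →L[ℝ] ℝ))
      x := by
  induction p using MvPolynomial.induction_on with
  | C a => simpa using hasFDerivAt_const a x
  | add p r hp hr =>
    simp only [map_add, add_smul, Finset.sum_add_distrib]
    exact hp.add hr
  | mul_X p i hp =>
    simp only [map_mul, eval_X]
    refine (hp.mul
      (EuclideanSpace.proj i : EuclideanSpace ℝ (Fin n) →L[ℝ] ℝ).hasFDerivAt).congr_fderiv ?_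
    ext y
    simp [pderiv_X, Pi.single_apply, add_mul, Finset.sum_add_distrib, Finset.mul_sum, apply_ite,
      ite_mul, mul_assoc]

/-- The map `ℝⁿ → ℝᵏ` whose components are the polynomials `P i`. -/
noncomputable def polyMap (P : Fin k → MvPolynomial (Fin n) ℝ) (x : EuclideanSpace ℝ (Fin n)) :
    EuclideanSpace ℝ (Fin k) :=
  WithLp.toLp 2 fun i => eval x (P i)

/-- The derivative of `polyMap P` at `x`, given by the Jacobian matrix of formal partial
derivatives. -/
noncomputable def polyMapDeriv (P : Fin k → MvPolynomial (Fin n) ℝ)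
    (x : EuclideanSpace ℝ (Fin n)) : EuclideanSpace ℝ (Fin n) →L[ℝ] EuclideanSpace ℝ (Fin k) :=
  (EuclideanSpace.equiv (Fin k) ℝ).symm.toContinuousLinearMap.comp <|
    .pi fun i => ∑ j, eval x (pderiv j (P i)) • EuclideanSpace.proj j

variable {P : Fin k → MvPolynomial (Fin n) ℝ}

lemma polyMapDeriv_apply (x y : EuclideanSpace ℝ (Fin n)) :
    polyMapDeriv P x y = WithLp.toLp 2 fun i => ∑ j, eval x (pderiv j (P i)) * y j := by
  ext i
  simp [polyMapDeriv]

lemma hasFDerivAt_polyMap (x : EuclideanSpace ℝ (Fin n)) :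
    HasFDerivAt (polyMap P) (polyMapDeriv P x) x :=
  (EuclideanSpace.equiv (Fin k) ℝ).symm.hasFDerivAt.comp x <|
    hasFDerivAt_pi.2 fun i => hasFDerivAt_eval (P i) x

lemma continuous_polyMapDeriv : Continuous (polyMapDeriv P) := by
  have heval : ∀ p : MvPolynomial (Fin n) ℝ,
      Continuous fun x : EuclideanSpace ℝ (Fin n) => eval x p := fun p =>
    (continuous_eval p).comp (by fun_prop)
  refine continuous_clm_apply.2 fun y => ?_
  simp only [polyMapDeriv_apply]
  fun_prop

lemma exists_eval_eq_pow_mul_inner_polyMap (hP : ∀ i, (P i).totalDegree ≤ d)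
    {τ : Type*} {q : MvPolynomial τ ℝ} (hq : q.totalDegree ≤ m)
    {p : Fin n → MvPolynomial τ ℝ} (hp : ∀ i, (p i).totalDegree ≤ m)
    (v : EuclideanSpace ℝ (Fin k)) :
    ∃ R : MvPolynomial τ ℝ, R.totalDegree ≤ d * m ∧
      ∀ (t : τ → ℝ) (x : EuclideanSpace ℝ (Fin n)), (∀ i, eval t (p i) = eval t q * x i) →
        eval t R = eval t q ^ d * inner ℝ v (polyMap P x) := by
  have hr : (∑ l, v l • P l).totalDegree ≤ d :=
    totalDegree_finsetSum_le fun l _ => (totalDegree_smul_le _ _).trans (hP l)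
  obtain ⟨R, hR, hRx⟩ := exists_eval_eq_pow_mul_eval hq hp hr
  refine ⟨R, hR, fun t x hx => ?_⟩
  rw [hRx t x hx]
  simp [polyMap, PiLp.inner_apply, mul_comm]

end PolynomialMap

section SphereSlice

open MvPolynomial Matrix

variable {V : Type*} [NormedAddCommGroup V] [InnerProductSpace ℝ V] {K n k d : ℕ}

/-- The point with stereographic coordinates `t` on the ellipsoid `∑ j, θ j • X j`, `‖θ‖ = 1`. For
independent standard Gaussian `X j` it is again a standard Gaussian vector. -/
noncomputable def sphereSlice (X : Fin (K + 1) → V) (t : Fin K → ℝ) : V :=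
  ∑ j, stereo t j • X j

/-- The derivative of `sphereSlice X` at `t`, normalized so that for independent standard Gaussian
`X j` and a unit vector `b` the vector `sphereSliceFrame X t b` is standard Gaussian. -/
noncomputable def sphereSliceFrame (X : Fin (K + 1) → V) (t : Fin K → ℝ) : (Fin K → ℝ) →L[ℝ] V :=
  (Fintype.linearCombination ℝ X).toContinuousLinearMap.comp (stereoFrame t)

lemma sphereSliceFrame_apply (X : Fin (K + 1) → V) (t b : Fin K → ℝ) :
    sphereSliceFrame X t b = ∑ j, stereoFrame t b j • X j :=
  rfl

lemma hasFDerivAt_sphereSlice (X : Fin (K + 1) → V) (t : Fin K → ℝ) :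
    HasFDerivAt (sphereSlice X) ((2 / (1 + t ⬝ᵥ t)) • sphereSliceFrame X t) t := by
  rw [sphereSliceFrame, ← ContinuousLinearMap.comp_smul]
  exact (Fintype.linearCombination ℝ X).toContinuousLinearMap.hasFDerivAt.comp t
    (hasFDerivAt_stereo t)

lemma continuous_sphereSlice :
    Continuous fun p : (Fin K → ℝ) × (Fin (K + 1) → V) => sphereSlice p.2 p.1 := by
  unfold sphereSlice
  have := continuous_stereo (n := K)
  fun_prop

lemma continuous_sphereSliceFrame (b : Fin K → ℝ) :
    Continuous fun p : (Fin K → ℝ) × (Fin (K + 1) → V) => sphereSliceFrame p.2 p.1 b := by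
  simp only [sphereSliceFrame_apply]
  have := continuous_stereoFrame (n := K)
  fun_prop

lemma measurePreserving_sphereSlice [FiniteDimensional ℝ V] [MeasurableSpace V] [BorelSpace V]
    (t : Fin K → ℝ) {b : Fin K → ℝ} (hb : b ⬝ᵥ b = 1) :
    MeasurePreserving (fun X : Fin (K + 1) → V => (sphereSlice X t, sphereSliceFrame X t b))
      (Measure.pi fun _ => ProbabilityTheory.stdGaussian V)
      ((ProbabilityTheory.stdGaussian V).prod (ProbabilityTheory.stdGaussian V)) where
  measurable := ((continuous_sphereSlice.prodMk (continuous_sphereSliceFrame b)).comp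
    (Continuous.prodMk_right t)).measurable
  map_eq := map_sum_smul_stdGaussian (stereo_dotProduct_self t)
    ((stereoFrame_dotProduct_self t b).trans hb) (stereo_dotProduct_stereoFrame t b)

variable (K) in
/-- The common denominator of the coordinates of `stereo`. -/
noncomputable def stereoDenom : MvPolynomial (Fin K) ℝ :=
  1 + ∑ j, X j ^ 2

lemma eval_stereoDenom (t : Fin K → ℝ) : eval t (stereoDenom K) = 1 + t ⬝ᵥ t := by
  simp [stereoDenom, dotProduct, sq]

lemma totalDegree_stereoDenom_le : (stereoDenom K).totalDegree ≤ 2 := by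
  refine (totalDegree_add _ _).trans (max_le (by simp) (totalDegree_finsetSum_le fun j _ => ?_))
  exact (totalDegree_X_pow j 2).le

lemma exists_eval_eq_mul_stereo (j : Fin (K + 1)) : ∃ p : MvPolynomial (Fin K) ℝ,
    p.totalDegree ≤ 2 ∧ ∀ t, eval t p = eval t (stereoDenom K) * stereo t j := by
  have ht := fun t : Fin K → ℝ => (one_add_dotProduct_self_pos t).ne'
  refine Fin.cases ⟨C 2 - stereoDenom K, (totalDegree_sub _ _).trans (max_le ?_
    totalDegree_stereoDenom_le), fun t => ?_⟩ (fun j => ⟨C 2 * X j, ?_, fun t => ?_⟩) j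
  · exact (totalDegree_C 2).trans_le zero_le
  · simp [eval_stereoDenom, stereo, mul_sub, mul_div_cancel₀ _ (ht t)]
  · exact (totalDegree_mul _ _).trans (by simp)
  · simp [eval_stereoDenom, stereo, ← mul_assoc, mul_div_cancel₀ _ (ht t)]

lemma exists_eval_eq_pow_mul_inner_polyMap_sphereSlice {P : Fin k → MvPolynomial (Fin n) ℝ}
    (hP : ∀ i, (P i).totalDegree ≤ d) (x : Fin (K + 1) → EuclideanSpace ℝ (Fin n))
    (v : EuclideanSpace ℝ (Fin k)) :
    ∃ R : MvPolynomial (Fin K) ℝ, R.totalDegree ≤ d * 2 ∧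
      ∀ t, eval t R = eval t (stereoDenom K ^ d) * inner ℝ v (polyMap P (sphereSlice x t)) := by
  choose p hpdeg hp using exists_eval_eq_mul_stereo (K := K)
  have hnum : ∀ i, (∑ j, x j i • p j).totalDegree ≤ 2 := fun i =>
    totalDegree_finsetSum_le fun j _ => (totalDegree_smul_le _ _).trans (hpdeg j)
  obtain ⟨R, hR, hRx⟩ :=
    exists_eval_eq_pow_mul_inner_polyMap hP totalDegree_stereoDenom_le hnum v
  refine ⟨R, hR, fun t => ?_⟩
  rw [map_pow]
  refine hRx t _ fun i => ?_
  simp only [sphereSlice, map_sum, smul_eval, hp, WithLp.ofLp_sum, WithLp.ofLp_smul,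
    Finset.sum_apply, Pi.smul_apply, smul_eq_mul, Finset.mul_sum]
  exact Finset.sum_congr rfl fun j _ => by ring

end SphereSlice

section SteepSlices

open Matrix

variable {n k d K : ℕ} {P : Fin k → MvPolynomial (Fin n) ℝ} {ε τ : ℝ}

/-- The pairs `(t, X)` such that the restriction of `polyMap P` to the slice spanned by `X` is
small at `t`, but all its derivatives there are large. -/
def steepSlices (K : ℕ) (P : Fin k → MvPolynomial (Fin n) ℝ) (ε τ : ℝ) :
    Set ((Fin K → ℝ) × (Fin (K + 1) → EuclideanSpace ℝ (Fin n))) :=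
  {p | ‖polyMap P (sphereSlice p.2 p.1)‖ < ε ∧ ∀ b i,
    τ * |b i| ≤ ‖polyMapDeriv P (sphereSlice p.2 p.1) (sphereSliceFrame p.2 p.1 b)‖}

lemma continuous_polyMap : Continuous (polyMap P) :=
  continuous_iff_continuousAt.2 fun x => (hasFDerivAt_polyMap x).continuousAt

lemma measurableSet_steepSlices : MeasurableSet (steepSlices K P ε τ) := by
  simp only [steepSlices, Set.ofPred_and, Set.ofPred_forall]
  have hframe := continuous_sphereSliceFrame (V := EuclideanSpace ℝ (Fin n)) (K := K)
  refine (isOpen_lt (continuous_polyMap.comp continuous_sphereSlice).norm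
    continuous_const).measurableSet.inter (IsClosed.measurableSet ?_)
  exact isClosed_iInter fun b => isClosed_iInter fun i => isClosed_le continuous_const
    ((continuous_polyMapDeriv.comp continuous_sphereSlice).clm_apply (hframe b)).norm

lemma continuous_polyMapDeriv_comp_sphereSliceFrame
    (X : Fin (K + 1) → EuclideanSpace ℝ (Fin n)) : Continuous fun t : Fin K → ℝ =>
      (polyMapDeriv P (sphereSlice X t)).comp ((2 / (1 + t ⬝ᵥ t)) • sphereSliceFrame X t) := by
  have hpos := fun t : Fin K → ℝ => (one_add_dotProduct_self_pos t).ne'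
  have hslice : Continuous (sphereSlice X) :=
    continuous_iff_continuousAt.2 fun t => (hasFDerivAt_sphereSlice X t).continuousAt
  have hframe : Continuous (sphereSliceFrame X) := continuous_const.clm_comp continuous_stereoFrame
  have hscale : Continuous fun t : Fin K → ℝ => 2 / (1 + t ⬝ᵥ t) := by
    fun_prop (disch := exact hpos _)
  exact (continuous_polyMapDeriv.comp hslice).clm_comp (hscale.smul hframe)

lemma one_add_dotProduct_self_le {t : Fin K → ℝ} (ht : t ∈ Set.Icc 0 1) :
    1 + t ⬝ᵥ t ≤ K + 1 := by
  have h : t ⬝ᵥ t ≤ ∑ _ : Fin K, (1 : ℝ) :=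
    Finset.sum_le_sum fun j _ => mul_le_one₀ (ht.2 j) (ht.1 j) (ht.2 j)
  simpa [add_comm] using h

lemma volume_steepSlices_le (hP : ∀ i, (P i).totalDegree ≤ d) (hτ : 0 < τ) (hε : 0 ≤ ε)
    (X : Fin (K + 1) → EuclideanSpace ℝ (Fin n)) :
    (volume.restrict (Set.Icc 0 1)).real ((fun t => (t, X)) ⁻¹' steepSlices K P ε τ) ≤
      fiberBound K (d * 2) * (16 * (K + 1) * ε / τ) ^ K := by
  have hmeas : MeasurableSet ((fun t => (t, X)) ⁻¹' steepSlices K P ε τ) :=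
    measurable_prodMk_right measurableSet_steepSlices
  let f' (t : Fin K → ℝ) : (Fin K → ℝ) →L[ℝ] EuclideanSpace ℝ (Fin k) :=
    (polyMapDeriv P (sphereSlice X t)).comp ((2 / (1 + t ⬝ᵥ t)) • sphereSliceFrame X t)
  have hlarge : ∀ t ∈ (fun t => (t, X)) ⁻¹' steepSlices K P ε τ ∩ Set.Icc 0 1, ∀ b i,
      2 / (K + 1) * τ * |b i| ≤ ‖f' t b‖ := fun t ht b i => by
    have hpos := one_add_dotProduct_self_pos t
    have hf't : f' t b =
        (2 / (1 + t ⬝ᵥ t)) • polyMapDeriv P (sphereSlice X t) (sphereSliceFrame X t b) :=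
      (polyMapDeriv P (sphereSlice X t)).map_smul _ _
    rw [hf't, norm_smul, Real.norm_of_nonneg (by positivity), mul_assoc]
    exact mul_le_mul (div_le_div_of_nonneg_left two_pos.le hpos (one_add_dotProduct_self_le ht.2))
      (ht.1.2 b i) (by positivity) (by positivity)
  have h := volume_small_value_large_derivative_le
    (q := stereoDenom K ^ d) (m := d * 2) (f := fun t => polyMap P (sphereSlice X t))
    ((MvPolynomial.totalDegree_pow _ _).trans (Nat.mul_le_mul_left d totalDegree_stereoDenom_le))
    (fun t => by
      rw [map_pow, eval_stereoDenom]
      exact pow_ne_zero _ (one_add_dotProduct_self_pos t).ne')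
    (exists_eval_eq_pow_mul_inner_polyMap_sphereSlice hP X)
    (fun t => (hasFDerivAt_polyMap _).comp t (hasFDerivAt_sphereSlice X t))
    (continuous_polyMapDeriv_comp_sphereSliceFrame X)
    (hmeas.inter measurableSet_Icc) (by positivity) (fun t ht => ht.1.1.le) hlarge
  have h := ENNReal.toReal_mono (by finiteness) h
  simp only [ENNReal.toReal_mul, ENNReal.toReal_pow, ENNReal.toReal_natCast] at h
  rw [ENNReal.toReal_ofReal (by positivity), ENNReal.toReal_ofReal (by positivity)] at h
  rw [measureReal_restrict_apply hmeas, Measure.real]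
  refine (le_div_iff₀' (by positivity)).2 h |>.trans_eq ?_
  rw [mul_div_assoc, ← div_pow]
  congr 2
  field_simp
  ring

end SteepSlices

section Averaging

open Matrix

variable {n k d K : ℕ} {P : Fin k → MvPolynomial (Fin n) ℝ} {ε τ T : ℝ}

lemma le_of_le_measureReal_slice {α Ω : Type*} [MeasurableSpace α] [MeasurableSpace Ω]
    {μ : Measure α} [IsProbabilityMeasure μ] {ν : Measure Ω} [IsProbabilityMeasure ν]
    {A : Set (α × Ω)} (hA : MeasurableSet A) {a c : ℝ} (ha : ∀ t, a ≤ ν.real (Prod.mk t ⁻¹' A))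
    (hc : ∀ ω, μ.real ((fun t => (t, ω)) ⁻¹' A) ≤ c) : a ≤ c := by
  obtain ⟨ω⟩ := nonempty_of_isProbabilityMeasure ν
  rw [← ENNReal.ofReal_le_ofReal_iff (measureReal_nonneg.trans (hc ω))]
  calc ENNReal.ofReal a = ∫⁻ _, ENNReal.ofReal a ∂μ := by simp
    _ ≤ ∫⁻ t, ν (Prod.mk t ⁻¹' A) ∂μ :=
      lintegral_mono fun t => ENNReal.ofReal_le_of_le_toReal (ha t)
    _ = ∫⁻ ω, μ ((fun t => (t, ω)) ⁻¹' A) ∂ν := by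
      rw [← Measure.prod_apply hA, Measure.prod_apply_symm hA]
    _ ≤ ∫⁻ _, ENNReal.ofReal c ∂ν :=
      lintegral_mono fun ω => (ENNReal.le_ofReal_iff_toReal_le (measure_ne_top _ _)
        (measureReal_nonneg.trans (hc ω))).2 (hc ω)
    _ = ENNReal.ofReal c := by simp

lemma le_of_le_measureReal_steepSlices (hP : ∀ i, (P i).totalDegree ≤ d) (hτ : 0 < τ) (hε : 0 ≤ ε)
    {a : ℝ} (ha : ∀ t : Fin K → ℝ, a ≤ (Measure.pi fun _ : Fin (K + 1) =>
      ProbabilityTheory.stdGaussian (EuclideanSpace ℝ (Fin n))).real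
        (Prod.mk t ⁻¹' steepSlices K P ε τ)) :
    a ≤ fiberBound K (d * 2) * (16 * (K + 1) * ε / τ) ^ K := by
  have : IsProbabilityMeasure (volume.restrict (Set.Icc (0 : Fin K → ℝ) 1)) :=
    ⟨by simp [Real.volume_Icc_pi]⟩
  exact le_of_le_measureReal_slice measurableSet_steepSlices ha (volume_steepSlices_le hP hτ hε)

lemma continuous_norm_polyMapDeriv : Continuous fun p : EuclideanSpace ℝ (Fin n) ×
    EuclideanSpace ℝ (Fin n) => ‖polyMapDeriv P p.1 p.2‖ :=
  ((continuous_polyMapDeriv.comp continuous_fst).clm_apply continuous_snd).norm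

lemma measurableSet_small_value_large_derivative : MeasurableSet
    {p : EuclideanSpace ℝ (Fin n) × EuclideanSpace ℝ (Fin n) |
      ‖polyMap P p.1‖ < ε ∧ T ≤ ‖polyMapDeriv P p.1 p.2‖} :=
  (isOpen_lt (continuous_polyMap.comp continuous_fst).norm continuous_const).measurableSet.inter
    (isClosed_le continuous_const continuous_norm_polyMapDeriv).measurableSet

lemma measureReal_small_value_large_derivative_le (hP : ∀ i, (P i).totalDegree ≤ d) (hT : 0 < T)
    (hε : 0 ≤ ε) :
    ((ProbabilityTheory.stdGaussian (EuclideanSpace ℝ (Fin n))).prod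
      (ProbabilityTheory.stdGaussian (EuclideanSpace ℝ (Fin n)))).real
        {p | ‖polyMap P p.1‖ < ε ∧ T ≤ ‖polyMapDeriv P p.1 p.2‖} ≤
      fiberBound 1 (d * 2) * (32 * ε / T) := by
  have hconst : (16 * (((1 : ℕ) : ℝ) + 1) * ε / T) ^ 1 = 32 * ε / T := by
    push_cast
    ring
  rw [← hconst]
  refine le_of_le_measureReal_steepSlices hP hT hε fun t => ?_
  rw [← (measurePreserving_sphereSlice t (b := 1) (by simp)).measureReal_preimage
    measurableSet_small_value_large_derivative.nullMeasurableSet]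
  refine measureReal_mono fun X hX => ⟨hX.1, fun b i => ?_⟩
  have hb : b = b i • 1 := by
    ext j
    simp [Subsingleton.elim j i]
  have hXT : T ≤ ‖polyMapDeriv P (sphereSlice X t) (sphereSliceFrame X t 1)‖ := hX.2
  conv_rhs => rw [hb, map_smul, map_smul, norm_smul, Real.norm_eq_abs, mul_comm]
  gcongr

lemma measureReal_norm_polyMapDeriv_sphereSliceFrame_lt_le (t : Fin K → ℝ) {b : Fin K → ℝ}
    (hb : 1 ≤ b ⬝ᵥ b) :
    (Measure.pi fun _ => ProbabilityTheory.stdGaussian (EuclideanSpace ℝ (Fin n))).real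
        {X | ‖polyMapDeriv P (sphereSlice X t) (sphereSliceFrame X t b)‖ < τ} ≤
      ((ProbabilityTheory.stdGaussian (EuclideanSpace ℝ (Fin n))).prod
        (ProbabilityTheory.stdGaussian (EuclideanSpace ℝ (Fin n)))).real
          {p | ‖polyMapDeriv P p.1 p.2‖ < τ} := by
  have hr : 1 ≤ √(b ⬝ᵥ b) := Real.one_le_sqrt.2 hb
  have hunit : (√(b ⬝ᵥ b))⁻¹ • b ⬝ᵥ (√(b ⬝ᵥ b))⁻¹ • b = 1 := by
    have hr2 := Real.mul_self_sqrt (zero_le_one.trans hb)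
    rw [smul_dotProduct, dotProduct_smul, smul_smul, smul_eq_mul, ← mul_inv, hr2]
    exact inv_mul_cancel₀ (zero_lt_one.trans_le hb).ne'
  rw [← (measurePreserving_sphereSlice t hunit).measureReal_preimage
    (isOpen_lt continuous_norm_polyMapDeriv continuous_const).measurableSet.nullMeasurableSet]
  refine measureReal_mono fun X hX => ?_
  simp only [Set.mem_preimage, Set.mem_ofPred_eq, map_smul, norm_smul]
  refine lt_of_le_of_lt (mul_le_of_le_one_left (norm_nonneg _) ?_) hX
  rw [norm_inv, Real.norm_of_nonneg (by positivity)]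
  exact inv_le_one_of_one_le₀ hr

end Averaging

section GridNet

open Matrix

variable {K M : ℕ}

variable (K M) in
/-- A net of the boundary of the cube `[-1, 1] ^ K`, up to sign: one coordinate equals `1` and the
others lie on a grid of mesh `1 / M`. -/
noncomputable def gridNet : Finset (Fin K → ℝ) :=
  Finset.univ.image fun a : Fin K × (Fin K → Fin (2 * M + 1)) =>
    Function.update (fun j => (a.2 j : ℝ) / M - 1) a.1 1

lemma card_gridNet_le : (gridNet K M).card ≤ K * (2 * M + 1) ^ K :=
  Finset.card_image_le.trans (by simp)

lemma one_le_dotProduct_self_of_mem_gridNet {a : Fin K → ℝ} (ha : a ∈ gridNet K M) :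
    1 ≤ a ⬝ᵥ a := by
  obtain ⟨⟨i, c⟩, -, rfl⟩ := Finset.mem_image.1 ha
  refine le_trans ?_ (Finset.single_le_sum (fun j _ => mul_self_nonneg _) (Finset.mem_univ i))
  simp

lemma exists_mem_gridNet_abs_sub_le (hM : 0 < M) {b : Fin K → ℝ} (hb : ∀ j, |b j| ≤ 1) {i : Fin K}
    (hi : b i = 1) : ∃ a ∈ gridNet K M, ∀ j, |a j - b j| ≤ 1 / M := by
  have hM' : (0 : ℝ) < M := Nat.cast_pos.2 hM
  have hfloor : ∀ j, ⌊(b j + 1) * M⌋₊ < 2 * M + 1 := fun j => by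
    refine Nat.lt_succ_of_le (Nat.floor_le_of_le ?_)
    push_cast
    exact mul_le_mul_of_nonneg_right (by linarith [(abs_le.1 (hb j)).2]) hM'.le
  refine ⟨_, Finset.mem_image_of_mem _ (Finset.mem_univ (i, fun j => ⟨_, hfloor j⟩)), fun j => ?_⟩
  obtain rfl | hj := eq_or_ne j i
  · simp [hi]
  · have hnonneg : 0 ≤ (b j + 1) * M := mul_nonneg (by linarith [(abs_le.1 (hb j)).1]) hM'.le
    have hround : (⌊(b j + 1) * M⌋₊ : ℝ) / M - 1 - b j =
        (⌊(b j + 1) * M⌋₊ - (b j + 1) * M) / M := by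
      field_simp
      ring
    rw [Function.update_of_ne hj, hround, abs_div, abs_of_pos hM', abs_sub_comm]
    gcongr
    rw [abs_le]
    constructor <;> linarith [Nat.floor_le hnonneg, Nat.lt_floor_add_one ((b j + 1) * M)]

variable {V : Type*} [NormedAddCommGroup V] [NormedSpace ℝ V] {L : (Fin K → ℝ) →L[ℝ] V} {τ T : ℝ}

lemma norm_apply_le_of_abs_le (hL : ∀ i, ‖L (Pi.single i 1)‖ ≤ T) {r : ℝ} (hr : 0 ≤ r)
    {c : Fin K → ℝ} (hc : ∀ j, |c j| ≤ r) : ‖L c‖ ≤ K * (r * T) := by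
  rw [pi_eq_sum_univ' c, map_sum]
  refine (norm_sum_le_of_le (n := fun _ => r * T) _ fun j _ => ?_).trans_eq (by simp)
  rw [map_smul, norm_smul]
  exact mul_le_mul (hc j) (hL j) (norm_nonneg _) hr

lemma mul_abs_le_norm_of_gridNet (hM : 0 < M) (hτ : 0 ≤ τ) (hT : K * T ≤ τ * M)
    (hL : ∀ i, ‖L (Pi.single i 1)‖ ≤ T) (hnet : ∀ a ∈ gridNet K M, 2 * τ ≤ ‖L a‖)
    (b : Fin K → ℝ) (i : Fin K) : τ * |b i| ≤ ‖L b‖ := by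
  obtain ⟨i₀, -, hi₀⟩ := Finset.univ.exists_max_image (fun j => |b j|) ⟨i, Finset.mem_univ i⟩
  refine (mul_le_mul_of_nonneg_left (hi₀ i (Finset.mem_univ i)) hτ).trans ?_
  obtain hz | hz := eq_or_ne (b i₀) 0
  · simp [hz]
  obtain ⟨a, ha, hab⟩ := exists_mem_gridNet_abs_sub_le hM (b := (b i₀)⁻¹ • b) (i := i₀)
    (fun j => by
      rw [Pi.smul_apply, smul_eq_mul, abs_mul, abs_inv, inv_mul_le_one₀ (abs_pos.2 hz)]
      exact hi₀ j (Finset.mem_univ j))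
    (inv_mul_cancel₀ hz)
  have herr : ‖L (a - (b i₀)⁻¹ • b)‖ ≤ τ := by
    refine (norm_apply_le_of_abs_le hL (by positivity) hab).trans ?_
    have hM' : (0 : ℝ) < M := Nat.cast_pos.2 hM
    rw [one_div_mul_eq_div, ← mul_div_assoc, div_le_iff₀ hM']
    exact hT
  have hunit : τ ≤ ‖L ((b i₀)⁻¹ • b)‖ := by
    rw [map_sub] at herr
    linarith [hnet a ha, norm_le_norm_add_norm_sub (L ((b i₀)⁻¹ • b)) (L a),
      norm_sub_rev (L a) (L ((b i₀)⁻¹ • b))]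
  rw [map_smul, norm_smul, norm_inv, Real.norm_eq_abs] at hunit
  exact (le_inv_mul_iff₀' (abs_pos.2 hz)).1 hunit

end GridNet

section SmallGradient

variable {n k d K M : ℕ} {P : Fin k → MvPolynomial (Fin n) ℝ} {ε τ T : ℝ}

lemma measureReal_norm_polyMap_sphereSlice_lt [NeZero K] (t : Fin K → ℝ) :
    (Measure.pi fun _ => ProbabilityTheory.stdGaussian (EuclideanSpace ℝ (Fin n))).real
        {X | ‖polyMap P (sphereSlice X t)‖ < ε} =
      (ProbabilityTheory.stdGaussian (EuclideanSpace ℝ (Fin n))).real {x | ‖polyMap P x‖ < ε} :=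
  (measurePreserving_fst.comp (measurePreserving_sphereSlice t (b := Pi.single 0 1)
    (by simp))).measureReal_preimage
      (isOpen_lt continuous_polyMap.norm continuous_const).measurableSet.nullMeasurableSet

lemma small_value_subset_steepSlices_union (hM : 0 < M) (hτ : 0 ≤ τ) (hT : K * T ≤ τ * M)
    (t : Fin K → ℝ) :
    {X : Fin (K + 1) → EuclideanSpace ℝ (Fin n) | ‖polyMap P (sphereSlice X t)‖ < ε} ⊆
      Prod.mk t ⁻¹' steepSlices K P ε τ ∪
      ((⋃ i, {X | ‖polyMap P (sphereSlice X t)‖ < ε ∧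
        T ≤ ‖polyMapDeriv P (sphereSlice X t) (sphereSliceFrame X t (Pi.single i 1))‖}) ∪
      ⋃ b ∈ gridNet K M,
        {X | ‖polyMapDeriv P (sphereSlice X t) (sphereSliceFrame X t b)‖ < 2 * τ}) := by
  refine fun X hX => or_iff_not_imp_right.2 fun h => ?_
  simp only [Set.mem_union, Set.mem_iUnion, Set.mem_ofPred_eq, not_or, not_exists, not_and,
    not_le, not_lt] at h
  exact ⟨hX, mul_abs_le_norm_of_gridNet
    (L := (polyMapDeriv P (sphereSlice X t)).comp (sphereSliceFrame X t)) hM hτ hT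
    (fun i => (h.1 i hX).le) h.2⟩

lemma measureReal_norm_polyMap_lt_le [NeZero K] (hP : ∀ i, (P i).totalDegree ≤ d) (hε : 0 ≤ ε)
    (hτ : 0 < τ) (hT : 0 < T) (hM : 0 < M) (hKT : K * T ≤ τ * M) :
    (ProbabilityTheory.stdGaussian (EuclideanSpace ℝ (Fin n))).real {x | ‖polyMap P x‖ < ε} ≤
      fiberBound K (d * 2) * (16 * (K + 1) * ε / τ) ^ K +
      K * (fiberBound 1 (d * 2) * (32 * ε / T)) +
      K * (2 * M + 1) ^ K * ((ProbabilityTheory.stdGaussian (EuclideanSpace ℝ (Fin n))).prod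
        (ProbabilityTheory.stdGaussian (EuclideanSpace ℝ (Fin n)))).real
          {p | ‖polyMapDeriv P p.1 p.2‖ < 2 * τ} := by
  rw [add_assoc, ← sub_le_iff_le_add]
  refine le_of_le_measureReal_steepSlices hP hτ hε fun t => ?_
  rw [sub_le_iff_le_add, ← measureReal_norm_polyMap_sphereSlice_lt t]
  refine (measureReal_mono (small_value_subset_steepSlices_union hM hτ.le hKT t)).trans ?_
  refine (measureReal_union_le _ _).trans (add_le_add_right ?_ _)
  refine (measureReal_union_le _ _).trans (add_le_add ?_ ?_)
  · refine ((measureReal_iUnion_fintype_le _).trans (Finset.sum_le_card_nsmul _ _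
      (fiberBound 1 (d * 2) * (32 * ε / T)) fun i _ => ?_)).trans_eq (by simp)
    refine le_trans (le_of_eq ?_) (measureReal_small_value_large_derivative_le hP hT hε)
    exact (measurePreserving_sphereSlice t (by simp)).measureReal_preimage
      measurableSet_small_value_large_derivative.nullMeasurableSet
  · refine (measureReal_biUnion_finset_le _ _).trans ((Finset.sum_le_card_nsmul _ _ _ fun b hb =>
      measureReal_norm_polyMapDeriv_sphereSliceFrame_lt_le t
        (one_le_dotProduct_self_of_mem_gridNet hb)).trans ?_)
    rw [nsmul_eq_mul]
    gcongr
    exact_mod_cast card_gridNet_le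

end SmallGradient

section ChoiceOfScales

variable {n k d K : ℕ} {P : Fin k → MvPolynomial (Fin n) ℝ} {ε c N : ℝ}

lemma div_rpow_pow_le (hε : 0 < ε) (hε1 : ε ≤ 1) (hK : N + 1 ≤ c * K) :
    (16 * (K + 1) * ε / (ε ^ (1 - c) / 2)) ^ K ≤ (32 * (K + 1)) ^ K * ε ^ (N + 1) := by
  have hdiv : 16 * (K + 1) * ε / (ε ^ (1 - c) / 2) = 32 * (K + 1) * ε ^ c := by
    rw [Real.rpow_sub hε, Real.rpow_one]
    field_simp
    norm_num
  rw [hdiv, mul_pow, ← Real.rpow_mul_natCast hε.le]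
  exact mul_le_mul_of_nonneg_left (Real.rpow_le_rpow_of_exponent_ge hε hε1 hK) (by positivity)

lemma two_mul_natCeil_add_one_pow_le (hε : 0 < ε) (hε1 : ε ≤ 1) (hc : 0 ≤ c) (hN : 0 ≤ N) :
    (2 * (⌈K * ε ^ (-N) / (ε ^ (1 - c) / 2)⌉₊ : ℝ) + 1) ^ K ≤
      (4 * K + 3) ^ K * ε ^ (-(K * (N + 1))) := by
  have hone : 1 ≤ ε ^ (-(N + 1)) :=
    Real.one_le_rpow_of_pos_of_le_one_of_nonpos hε hε1 (by linarith)
  have hratio : K * ε ^ (-N) / (ε ^ (1 - c) / 2) ≤ 2 * K * ε ^ (-(N + 1)) := by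
    calc _ = 2 * K * ε ^ (-N - (1 - c)) := by
          rw [Real.rpow_sub hε (-N)]
          field_simp
      _ ≤ _ := mul_le_mul_of_nonneg_left
        (Real.rpow_le_rpow_of_exponent_ge hε hε1 (by linarith)) (by positivity)
  have hpow : ε ^ (-(K * (N + 1))) = (ε ^ (-(N + 1))) ^ K := by
    rw [← Real.rpow_mul_natCast hε.le]
    ring_nf
  rw [hpow, ← mul_pow]
  gcongr
  linarith [Nat.ceil_lt_add_one (by positivity : 0 ≤ K * ε ^ (-N) / (ε ^ (1 - c) / 2))]

lemma measureReal_norm_polyMap_lt_le_rpow [NeZero K] (hP : ∀ i, (P i).totalDegree ≤ d)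
    (hε : 0 < ε) (hε1 : ε ≤ 1) (hc : 0 ≤ c) (hN : 0 ≤ N) (hK : N + 1 ≤ c * K) :
    (ProbabilityTheory.stdGaussian (EuclideanSpace ℝ (Fin n))).real {x | ‖polyMap P x‖ < ε} ≤
      (fiberBound K (d * 2) * (32 * (K + 1)) ^ K + 32 * K * fiberBound 1 (d * 2)) * ε ^ (N + 1) +
      K * (4 * K + 3) ^ K * ε ^ (-(K * (N + 1))) *
        ((ProbabilityTheory.stdGaussian (EuclideanSpace ℝ (Fin n))).prod
          (ProbabilityTheory.stdGaussian (EuclideanSpace ℝ (Fin n)))).real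
            {p | ‖polyMapDeriv P p.1 p.2‖ < ε ^ (1 - c)} := by
  have hK0 : (0 : ℝ) < K := Nat.cast_pos.2 (NeZero.pos K)
  have hpos : 0 < K * ε ^ (-N) / (ε ^ (1 - c) / 2) := by positivity
  have hT : 32 * ε / ε ^ (-N) = 32 * ε ^ (N + 1) := by
    rw [Real.rpow_neg hε.le, Real.rpow_add hε, Real.rpow_one]
    field_simp
  have h := measureReal_norm_polyMap_lt_le (K := K) (τ := ε ^ (1 - c) / 2) (T := ε ^ (-N)) hP hε.le
    (by positivity) (by positivity) (Nat.ceil_pos.2 hpos)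
    ((div_le_iff₀' (by positivity)).1 (Nat.le_ceil _))
  rw [hT, mul_div_cancel₀ _ two_ne_zero] at h
  refine h.trans ?_
  rw [add_mul, mul_assoc _ (_ ^ K) (ε ^ (N + 1)), mul_assoc (K : ℝ) (_ ^ K) (ε ^ _)]
  refine add_le_add (add_le_add ?_ (le_of_eq (by ring))) ?_
  · exact mul_le_mul_of_nonneg_left (div_rpow_pow_le hε hε1 hK) (by positivity)
  · gcongr
    exact two_mul_natCeil_add_one_pow_le hε hε1 hc hN

lemma rpow_lt_of_rpow_lt_add {L D E p : ℝ} (hε : 0 < ε) (hE : 0 ≤ E) (hDε : D * ε ≤ 1 / 2)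
    (hEε : E * ε ≤ 1 / 2) (h : ε ^ N < D * ε ^ (N + 1) + E * ε ^ (-L) * p) :
    ε ^ (N + L + 1) < p := by
  by_contra! hp
  have hpos : 0 < ε ^ N := by positivity
  refine h.not_ge ?_
  calc D * ε ^ (N + 1) + E * ε ^ (-L) * p
      ≤ D * ε ^ (N + 1) + E * ε ^ (-L) * ε ^ (N + L + 1) := by gcongr
    _ = (D * ε + E * ε) * ε ^ N := by
      rw [Real.rpow_neg hε.le, Real.rpow_add hε, Real.rpow_add hε, Real.rpow_add hε, Real.rpow_one]
      field_simp
    _ ≤ ε ^ N := mul_le_of_le_one_left hpos.le (by linarith)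

lemma exists_rpow_lt_measureReal_norm_polyMapDeriv_lt (d : ℕ) (hc : 0 < c) (hN : 0 ≤ N) :
    ∃ ε₀ C' : ℝ, 0 < ε₀ ∧ 0 < C' ∧ ∀ ε, 0 < ε → ε < ε₀ →
      ∀ (n k : ℕ) (P : Fin k → MvPolynomial (Fin n) ℝ), (∀ i, (P i).totalDegree ≤ d) →
        ε ^ N < (ProbabilityTheory.stdGaussian (EuclideanSpace ℝ (Fin n))).real
          {x | ‖polyMap P x‖ < ε} →
        ε ^ C' < ((ProbabilityTheory.stdGaussian (EuclideanSpace ℝ (Fin n))).prod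
          (ProbabilityTheory.stdGaussian (EuclideanSpace ℝ (Fin n)))).real
            {p | ‖polyMapDeriv P p.1 p.2‖ < ε ^ (1 - c)} := by
  obtain ⟨m, hm⟩ := exists_nat_ge ((N + 1) / c)
  set K := m + 1
  have hK : N + 1 ≤ c * K := by
    rw [← div_le_iff₀' hc]
    exact hm.trans (Nat.cast_le.2 m.le_succ)
  set D : ℝ := fiberBound K (d * 2) * (32 * (K + 1)) ^ K + 32 * K * fiberBound 1 (d * 2)
  set E : ℝ := K * (4 * K + 3) ^ K
  have hD : 0 ≤ D := by positivity
  have hE : 0 ≤ E := by positivity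
  refine ⟨1 / (2 * (D + E + 1)), N + K * (N + 1) + 1, by positivity, by positivity,
    fun ε hε hε₀ n k P hP hsmall => ?_⟩
  rw [lt_div_iff₀ (by positivity)] at hε₀
  have hDε : 0 ≤ D * ε := mul_nonneg hD hε.le
  have hEε : 0 ≤ E * ε := mul_nonneg hE hε.le
  exact rpow_lt_of_rpow_lt_add hε hE (by linarith) (by linarith) <|
    hsmall.trans_le (measureReal_norm_polyMap_lt_le_rpow hP hε (by linarith) hc.le hN hK)

end ChoiceOfScales

section Coordinates

variable {n : ℕ}

lemma measurePreserving_toLp_stdGaussian : MeasurePreserving (WithLp.toLp 2)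
    (_root_.stdGaussian n) (ProbabilityTheory.stdGaussian (EuclideanSpace ℝ (Fin n))) where
  measurable := by fun_prop
  map_eq := map_pi_eq_stdGaussian

lemma stdGaussian_sqrt_sum_sq_lt {k : ℕ} (P : Fin k → MvPolynomial (Fin n) ℝ) (ε : ℝ) :
    _root_.stdGaussian n {x | √(∑ i, MvPolynomial.eval x (P i) ^ 2) < ε} =
      ProbabilityTheory.stdGaussian (EuclideanSpace ℝ (Fin n)) {x | ‖polyMap P x‖ < ε} := by
  rw [← measurePreserving_toLp_stdGaussian.measure_preimage
    (isOpen_lt continuous_polyMap.norm continuous_const).measurableSet.nullMeasurableSet]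
  simp [polyMap, EuclideanSpace.norm_eq]

lemma stdGaussian_prod_sqrt_sum_sq_lt {k : ℕ} (P : Fin k → MvPolynomial (Fin n) ℝ) (ε : ℝ) :
    (_root_.stdGaussian n).prod (_root_.stdGaussian n)
        {xy | √(∑ i, (∑ j, MvPolynomial.eval xy.1 (MvPolynomial.pderiv j (P i)) * xy.2 j) ^ 2) <
          ε} =
      (ProbabilityTheory.stdGaussian (EuclideanSpace ℝ (Fin n))).prod
        (ProbabilityTheory.stdGaussian (EuclideanSpace ℝ (Fin n)))
          {p | ‖polyMapDeriv P p.1 p.2‖ < ε} := by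
  have : SFinite (_root_.stdGaussian n) := by unfold _root_.stdGaussian; infer_instance
  rw [← (measurePreserving_toLp_stdGaussian.prod
    measurePreserving_toLp_stdGaussian).measure_preimage
    (isOpen_lt continuous_norm_polyMapDeriv continuous_const).measurableSet.nullMeasurableSet]
  simp [polyMapDeriv_apply, EuclideanSpace.norm_eq]

end Coordinates

theorem small_derivative_prop_general (d : ℕ) (c N : ℝ) (hc : 0 < c) (hN : 0 ≤ N) :
    ∃ ε₀ C' : ℝ, 0 < ε₀ ∧ 0 < C' ∧ ∀ ε, 0 < ε → ε < ε₀ →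
      ∀ (n k : ℕ) (P : Fin k → MvPolynomial (Fin n) ℝ), (∀ i, (P i).totalDegree ≤ d) →
        ENNReal.ofReal (ε ^ N) <
          _root_.stdGaussian n {x | √(∑ i, MvPolynomial.eval x (P i) ^ 2) < ε} →
        ENNReal.ofReal (ε ^ C') < (_root_.stdGaussian n).prod (_root_.stdGaussian n)
          {xy | √(∑ i, (∑ j, MvPolynomial.eval xy.1 (MvPolynomial.pderiv j (P i)) * xy.2 j) ^ 2) <
            ε ^ (1 - c)} := by
  obtain ⟨ε₀, C', hε₀, hC', h⟩ := exists_rpow_lt_measureReal_norm_polyMapDeriv_lt d hc hN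
  refine ⟨ε₀, C', hε₀, hC', fun ε hε hεε₀ n k P hP hsmall => ?_⟩
  rw [stdGaussian_sqrt_sum_sq_lt, ENNReal.ofReal_lt_iff_lt_toReal (by positivity)
    (measure_ne_top _ _)] at hsmall
  rw [stdGaussian_prod_sqrt_sum_sq_lt, ENNReal.ofReal_lt_iff_lt_toReal (by positivity)
    (measure_ne_top _ _)]
  exact h ε hε hεε₀ n k P hP hsmall

/-- For `c, N > 0` and `d` a positive integer, there exist `ε₀ > 0` and `C' > 0` depending only
on `N, c, d` such that for every `0 < ε < ε₀` and every polynomial `p` of degree at most `d` with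
`Pr_X(‖∇p(X)‖₂ < ε) > ε^N`, one has `Pr_{X,Y}(‖Hess p(X) · Y‖₂ < ε^{1-c}) > ε^{C'}`. -/
theorem small_derivative_prop (d : ℕ) (hd : 0 < d) (c N : ℝ) (hc : 0 < c) (hN : 0 < N) :
    ∃ (ε₀ C' : ℝ), 0 < ε₀ ∧ 0 < C' ∧
      ∀ (ε : ℝ), 0 < ε → ε < ε₀ →
        ∀ (n : ℕ) (p : MvPolynomial (Fin n) ℝ), p.totalDegree ≤ d →
          ENNReal.ofReal (ε ^ N) <
            stdGaussian n
              {x | Real.sqrt (∑ i, (MvPolynomial.eval x (MvPolynomial.pderiv i p)) ^ 2) < ε} →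
          ENNReal.ofReal (ε ^ C') <
            ((stdGaussian n).prod (stdGaussian n))
              {xy | Real.sqrt (∑ i,
                  (∑ j, MvPolynomial.eval xy.1
                    (MvPolynomial.pderiv j (MvPolynomial.pderiv i p)) * xy.2 j) ^ 2) <
                ε ^ (1 - c)} :=
  let ⟨ε₀, C', hε₀, hC', h⟩ := small_derivative_prop_general d c N hc hN.le
  ⟨ε₀, C', hε₀, hC', fun ε hε hεε₀ n p hp =>
    h ε hε hεε₀ n n _ fun i => (totalDegree_pderiv_le p i).trans hp⟩
end

section
/- For 1 ≤ i ≤ k let pⁱ : ℝⁿ → ℝ be a polynomial of degree at most d_i, and let δ > 0 and ε₁, …, ε_k > 0. Let X, Y¹, …, Y^k be independent standard Gaussian random vectors on ℝⁿ, and let M be the k×k random matrix with entries M_{ij} = ⟨∇pⁱ(X), Y^j⟩. Then Pr(|pⁱ(X)| < ε_i for all i, and |det M| > δ) ≤ 2^{k+1}·(∏_{i=1}^k d_i)·(∏_{i=1}^k ε_i) / (δ·V_k), where V_k = 2·π^{(k+1)/2} / Γ((k+1)/2) is the surface measure of the unit sphere S^k ⊂ ℝ^{k+1}. -/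
/-!
Let `Z⁰, …, Z^k` be independent standard Gaussian vectors and restrict the random polynomial map
`q : θ ↦ p (∑ j, θ j • Z^j)` to the unit sphere `S^k`. By rotation invariance, the law of the pair
(value, absolute Jacobian determinant) of `q` at `θ` does not depend on `θ`; at the first basis
vector the value is `p (Z⁰)` and the Jacobian matrix consists of the inner products
`⟨∇pⁱ(Z⁰), Z^j⟩` with `1 ≤ j ≤ k`.

The expectation of `|det M|` on the event that `p (X)` lies in a box is therefore the average over
`Z` and `θ` of the Jacobian of `q` on the preimage of the box. For every fixed `Z`, the area formula
bounds the integral over `θ` by the volume of the box times the number of regular solutions of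
`q θ = y` on the sphere, and Bézout's bound for this system of degrees `2, d₁, …, d_k` is
`2 * d₁ ⋯ d_k`. Markov's inequality finishes the proof.

For Bézout's bound, let `D` be the product of the degrees of a square system `f` and let `g` be a
linear form. Counting monomials shows that `f` and `g` satisfy a polynomial relation `P(f, g) = 0`
whose degree in `g` is at most `D`. If `f = y` had more than `D` regular solutions, choose `g` to
separate them. By the inverse function theorem they persist, still separated, when `y` is moved to
a nearby `z` at which the leading coefficient of `P(z, ·)` does not vanish, so `P(z, ·)` would have
more than `D` roots.
-/

open MeasureTheory ProbabilityTheory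

lemma exists_lt_mul_of_le_add_one_pow {c : ℕ → ℝ} {n : ℕ} (hpos : 0 < c 0)
    (hc : ∀ N, c N ≤ ((N : ℝ) + 1) ^ n) (D : ℕ) {q : ℝ} (hq : 1 < q) :
    ∃ N, c (N + D) < q * c N := by
  by_contra! hgrowth
  have lower (j : ℕ) : q ^ j * c 0 ≤ c (j * D) := by
    induction j with
    | zero => simp
    | succ j ih =>
      calc q ^ (j + 1) * c 0 = q * (q ^ j * c 0) := by ring
        _ ≤ q * c (j * D) := by gcongr
        _ ≤ c ((j + 1) * D) := by rw [add_one_mul]; exact hgrowth _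
  have upper (j : ℕ) (hj : 1 ≤ j) : c 0 ≤ ((D : ℝ) + 1) ^ n * ((j : ℝ) ^ n / q ^ j) := by
    have hj' : (1 : ℝ) ≤ j := by exact_mod_cast hj
    rw [← mul_div_assoc, le_div_iff₀ (by positivity), mul_comm, ← mul_pow]
    refine (lower j).trans ((hc _).trans (pow_le_pow_left₀ (by positivity) ?_ _))
    push_cast
    linarith
  have limit := (tendsto_pow_const_div_const_pow_of_one_lt n hq).const_mul (((D : ℝ) + 1) ^ n)
  rw [mul_zero] at limit
  obtain ⟨j, hj, hj'⟩ :=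
    ((limit.eventually_lt_const hpos).and (Filter.eventually_ge_atTop 1)).exists
  exact (upper j hj').not_gt hj

section WeightCounting
open Finsupp

variable {ι : Type*} [Fintype ι]

lemma card_weight_one_le_le_add_one_pow (N : ℕ) :
    Nat.card {a : ι →₀ ℕ // weight (1 : ι → ℕ) a ≤ N} ≤ (N + 1) ^ Fintype.card ι := by
  let toFin : {a : ι →₀ ℕ // weight (1 : ι → ℕ) a ≤ N} → ι → Fin (N + 1) := fun a i =>
    ⟨a.1 i, Nat.lt_succ_of_le ((le_weight (1 : ι → ℕ) (s := i) one_ne_zero a.1).trans a.2)⟩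
  have toFin_injective : Function.Injective toFin := fun a b h =>
    Subtype.ext (Finsupp.ext fun i => congrArg Fin.val (congrFun h i))
  simpa [Nat.card_pi] using Nat.card_le_card_of_injective toFin toFin_injective

lemma card_weight_one_le_le_prod_mul {d : ι → ℕ} (hd : ∀ i, d i ≠ 0) (N : ℕ) :
    Nat.card {a : ι →₀ ℕ // weight (1 : ι → ℕ) a ≤ N} ≤
      (∏ i, d i) * Nat.card {a : ι →₀ ℕ // weight d a ≤ N} := by
  have quotient_weight (a : ι →₀ ℕ) :
      weight d (equivFunOnFinite.symm fun i => a i / d i) ≤ weight (1 : ι → ℕ) a := by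
    simp only [weight_apply, sum_fintype, smul_eq_mul, zero_mul, implies_true,
      equivFunOnFinite_symm_apply_apply, Pi.one_apply, mul_one]
    exact Finset.sum_le_sum fun i _ => Nat.div_mul_le_self _ _
  let divMod : {a : ι →₀ ℕ // weight (1 : ι → ℕ) a ≤ N} →
      ((i : ι) → Fin (d i)) × {a : ι →₀ ℕ // weight d a ≤ N} := fun a =>
    (fun i => ⟨a.1 i % d i, Nat.mod_lt _ (hd i).bot_lt⟩, ⟨_, (quotient_weight a.1).trans a.2⟩)
  have divMod_injective : Function.Injective divMod := by
    intro a b h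
    refine Subtype.ext (Finsupp.ext fun i => ?_)
    have hmod : a.1 i % d i = b.1 i % d i := congrArg Fin.val (congrFun (congrArg Prod.fst h) i)
    have hdiv : a.1 i / d i = b.1 i / d i :=
      DFunLike.congr_fun (congrArg (fun x => x.2.1) h) i
    rw [← Nat.mod_add_div (a.1 i) (d i), ← Nat.mod_add_div (b.1 i) (d i), hmod, hdiv]
  have : Finite {a : ι →₀ ℕ // weight d a ≤ N} := finite_of_nat_weight_le d hd N
  simpa [Nat.card_pi] using Nat.card_le_card_of_injective divMod divMod_injective

lemma exists_card_weight_one_lt {d : ι → ℕ} (hd : ∀ i, d i ≠ 0) :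
    ∃ N, Nat.card {a : ι →₀ ℕ // weight (1 : ι → ℕ) a ≤ N + ∏ i, d i} <
      Nat.card {a : ι →₀ ℕ // weight d a ≤ N} * (∏ i, d i + 1) := by
  set D := ∏ i, d i
  have hD : 0 < D := Finset.prod_pos fun i _ => (hd i).bot_lt
  have : Nonempty {a : ι →₀ ℕ // weight (1 : ι → ℕ) a ≤ 0} := ⟨⟨0, by simp⟩⟩
  have : Finite {a : ι →₀ ℕ // weight (1 : ι → ℕ) a ≤ 0} :=
    finite_of_nat_weight_le _ (fun _ => one_ne_zero) 0
  obtain ⟨N, hN⟩ := exists_lt_mul_of_le_add_one_pow (D := D) (q := (D + 1) / D)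
    (c := fun N => Nat.card {a : ι →₀ ℕ // weight (1 : ι → ℕ) a ≤ N})
    (by exact_mod_cast Nat.card_pos)
    (fun N => by exact_mod_cast card_weight_one_le_le_add_one_pow (ι := ι) N)
    (by rw [one_lt_div (by positivity)]; linarith)
  refine ⟨N, Nat.lt_of_mul_lt_mul_left (a := D) ?_⟩
  rw [div_mul_eq_mul_div, lt_div_iff₀ (by positivity)] at hN
  calc D * Nat.card {a : ι →₀ ℕ // weight (1 : ι → ℕ) a ≤ N + D}
      < (D + 1) * Nat.card {a : ι →₀ ℕ // weight (1 : ι → ℕ) a ≤ N} := by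
        rw [mul_comm]; exact_mod_cast hN
    _ ≤ (D + 1) * (D * Nat.card {a : ι →₀ ℕ // weight d a ≤ N}) := by
        gcongr; exact card_weight_one_le_le_prod_mul hd N
    _ = D * (Nat.card {a : ι →₀ ℕ // weight d a ≤ N} * (D + 1)) := by ring

end WeightCounting

section AlgebraicRelation
open MvPolynomial Finsupp

variable {ι K : Type*} [Field K]

lemma finrank_restrictTotalDegree (N : ℕ) :
    Module.finrank K (restrictTotalDegree ι K N) =
      Nat.card {a : ι →₀ ℕ // weight (1 : ι → ℕ) a ≤ N} := by
  rw [restrictTotalDegree, Module.finrank_eq_nat_card_basis (basisRestrictSupport K _)]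
  exact Nat.card_congr (Equiv.subtypeEquivRight fun a => by simp [weight_apply])

lemma totalDegree_bind₁_monomial_mul_pow_le (f : ι → MvPolynomial ι K) (g : MvPolynomial ι K)
    (a : ι →₀ ℕ) (j : ℕ) :
    (bind₁ f (monomial a (1 : K)) * g ^ j).totalDegree ≤
      weight (fun i => (f i).totalDegree) a + j * g.totalDegree := by
  refine (totalDegree_mul _ _).trans (add_le_add ?_ (totalDegree_pow _ _))
  rw [bind₁_monomial, map_one, one_mul, weight_apply, Finsupp.sum]
  refine (totalDegree_finsetProd _ _).trans (Finset.sum_le_sum fun i _ => ?_)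
  exact totalDegree_pow _ _

lemma exists_polynomial_relation_s3 [Fintype ι] (f : ι → MvPolynomial ι K)
    (hf : ∀ i, (f i).totalDegree ≠ 0) {g : MvPolynomial ι K} (hg : g.totalDegree ≤ 1) :
    ∃ P : Polynomial (MvPolynomial ι K), P ≠ 0 ∧ P.natDegree ≤ ∏ i, (f i).totalDegree ∧
      P.eval₂ (bind₁ f : MvPolynomial ι K →+* MvPolynomial ι K) g = 0 := by
  classical
  set d : ι → ℕ := fun i => (f i).totalDegree
  set D := ∏ i, d i
  obtain ⟨N, hN⟩ := exists_card_weight_one_lt hf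
  have : Finite {a : ι →₀ ℕ // weight d a ≤ N} := finite_of_nat_weight_le d hf N
  have := Fintype.ofFinite {a : ι →₀ ℕ // weight d a ≤ N}
  have degree_le (x : {a : ι →₀ ℕ // weight d a ≤ N} × Fin (D + 1)) :
      (bind₁ f (monomial x.1.1 (1 : K)) * g ^ (x.2 : ℕ)).totalDegree ≤ N + D :=
    (totalDegree_bind₁_monomial_mul_pow_le f g _ _).trans
      (add_le_add x.1.2 (by nlinarith [x.2.is_le]))
  let v (x : {a : ι →₀ ℕ // weight d a ≤ N} × Fin (D + 1)) : restrictTotalDegree ι K (N + D) :=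
    ⟨_, (mem_restrictTotalDegree _ _ _).2 (degree_le x)⟩
  have dependent : ¬ LinearIndependent K v := by
    intro hv
    have := hv.fintype_card_le_finrank
    rw [finrank_restrictTotalDegree, Fintype.card_prod, Fintype.card_fin,
      ← Nat.card_eq_fintype_card] at this
    exact this.not_gt hN
  obtain ⟨c, hc, ⟨a, j⟩, haj⟩ := Fintype.not_linearIndependent_iff.1 dependent
  refine ⟨∑ x, Polynomial.monomial x.2 (monomial x.1.1 (c x)), fun h => haj ?_, ?_, ?_⟩
  · have := congrArg (fun P => (P.coeff j).coeff a.1) h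
    simpa [Polynomial.finsetSum_coeff, Polynomial.coeff_monomial, coeff_sum, Fintype.sum_prod_type,
      Fin.val_inj, apply_ite, coeff_monomial, Subtype.val_inj] using this
  · exact Polynomial.natDegree_sum_le_of_forall_le _ _ fun x _ =>
      (Polynomial.natDegree_monomial_le _).trans x.2.is_le
  · have := congrArg Subtype.val hc
    simp only [v, AddSubmonoidClass.coe_finsetSum, SetLike.val_smul, ZeroMemClass.coe_zero] at this
    rw [← this, Polynomial.eval₂_finsetSum]
    refine Finset.sum_congr rfl fun x _ => ?_
    simp [bind₁_monomial, smul_eq_C_mul, mul_assoc]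

end AlgebraicRelation

section Bezout
open MvPolynomial Filter Topology

lemma exists_totalDegree_le_one_injOn_eval {ι K : Type*} [Finite ι] [Field K] [Infinite K]
    (S : Finset (ι → K)) :
    ∃ g : MvPolynomial ι K, g.totalDegree ≤ 1 ∧ Set.InjOn (fun x => eval x g) S := by
  classical
  have := Fintype.ofFinite ι
  obtain ⟨l, hl⟩ := Module.exists_dual_forall_apply_ne_zero (K := K)
    (fun z : {z : S × S // z.1 ≠ z.2} => z.1.1.1 - z.1.2.1)
    (fun z h => z.2 (Subtype.ext (sub_eq_zero.1 h)))
  have eval_eq (x : ι → K) : eval x (∑ i, C (l (Pi.single i 1)) * X i) = l x := by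
    conv_rhs => rw [pi_eq_sum_univ' x]
    simp [mul_comm]
  refine ⟨∑ i, C (l (Pi.single i 1)) * X i,
    totalDegree_finsetSum_le fun i _ => (totalDegree_mul _ _).trans (by simp),
    fun x hx y hy hxy => by_contra fun hne => ?_⟩
  refine hl ⟨(⟨x, hx⟩, ⟨y, hy⟩), fun h => hne (congrArg Subtype.val h)⟩ ?_
  simpa only [eval_eq, map_sub, sub_eq_zero] using hxy

lemma frequently_eval_ne_zero {ι 𝕜 : Type*} [NontriviallyNormedField 𝕜]
    {P : MvPolynomial ι 𝕜} (hP : P ≠ 0) (y : ι → 𝕜) : ∃ᶠ z in 𝓝 y, eval z P ≠ 0 := by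
  intro hzero
  simp only [not_not] at hzero
  rw [nhds_pi] at hzero
  obtain ⟨I, t, ht, hsub⟩ := Filter.mem_pi'.1 hzero
  refine hP (funext_set t (fun i => infinite_of_mem_nhds (y i) (ht i)) fun z hz => ?_)
  simpa using hsub (fun i _ => hz i (Set.mem_univ i))

lemma eventually_card_le_encard_image_fiber {X Y Z : Type*} [TopologicalSpace X]
    [TopologicalSpace Y] [TopologicalSpace Z] [T2Space Z] {F : X → Y} {g : X → Z} {y : Y}
    {S : Finset X} (hF : ∀ x ∈ S, 𝓝 y ≤ map F (𝓝 x)) (hg : ∀ x ∈ S, ContinuousAt g x)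
    (hinj : Set.InjOn g S) :
    ∀ᶠ z in 𝓝 y, (S.card : ℕ∞) ≤ (g '' (F ⁻¹' {z})).encard := by
  obtain ⟨V, hV, hdisj⟩ := (S.finite_toSet.image g).t2_separation
  have hits (x) (hx : x ∈ S) : ∀ᶠ z in 𝓝 y, ∃ x', F x' = z ∧ g x' ∈ V (g x) := by
    have : F '' (g ⁻¹' V (g x)) ∈ 𝓝 y :=
      hF x hx (image_mem_map (hg x hx ((hV _).2.mem_nhds (hV _).1)))
    filter_upwards [this] with z ⟨x', hx', hz⟩ using ⟨x', hz, hx'⟩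
  filter_upwards [(eventually_all_finset S).2 hits] with z hz
  choose! w hFw hgw using hz
  rw [← Set.encard_coe_eq_coe_finsetCard]
  refine Set.encard_le_encard_of_injOn (f := g ∘ w) (fun x hx => ⟨w x, hFw x hx, rfl⟩) ?_
  intro x hx x' hx' heq
  by_contra hne
  refine Set.disjoint_left.1 (hdisj ⟨x, hx, rfl⟩ ⟨x', hx', rfl⟩ fun h => hne (hinj hx hx' h))
    (hgw x hx) ?_
  exact (show g (w x) = g (w x') from heq) ▸ hgw x' hx'

lemma encard_image_fiber_le_natDegree {ι κ R : Type*} [CommRing R] [IsDomain R]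
    {f : κ → MvPolynomial ι R} {g : MvPolynomial ι R} {P : Polynomial (MvPolynomial κ R)}
    (hrel : P.eval₂ (bind₁ f : MvPolynomial κ R →+* MvPolynomial ι R) g = 0) {z : κ → R}
    (hz : eval z P.leadingCoeff ≠ 0) :
    ((fun x => eval x g) '' ((fun x i => eval x (f i)) ⁻¹' {z})).encard ≤ P.natDegree := by
  classical
  have hQ : P.map (eval z) ≠ 0 := by
    rw [← Polynomial.leadingCoeff_ne_zero, Polynomial.leadingCoeff_map_of_leadingCoeff_ne_zero _ hz]
    exact hz
  have roots : (fun x => eval x g) '' ((fun x i => eval x (f i)) ⁻¹' {z}) ⊆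
      (P.map (eval z)).roots.toFinset := by
    rintro _ ⟨x, rfl, rfl⟩
    have := congrArg (eval x) hrel
    rw [Polynomial.hom_eval₂, map_zero] at this
    rw [Finset.mem_coe, Multiset.mem_toFinset, Polynomial.mem_roots hQ, Polynomial.IsRoot,
      Polynomial.eval_map, ← this]
    congr 1
    ext <;> simp
  refine (Set.encard_le_encard roots).trans ?_
  rw [Set.encard_coe_eq_coe_finsetCard, Nat.cast_le]
  exact (Multiset.toFinset_card_le _).trans
    ((Polynomial.card_roots' _).trans (Polynomial.natDegree_map_le))

/-- The Jacobian matrix at `x` of the polynomial map `f`, with `i`-th row the gradient of `f i`. -/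
noncomputable def jacobian {ι κ R : Type*} [CommSemiring R] (f : κ → MvPolynomial ι R)
    (x : ι → R) : Matrix κ ι R :=
  .of fun i j => eval x (pderiv j (f i))

variable {ι κ 𝕜 : Type*} [Fintype ι] [NontriviallyNormedField 𝕜]

lemma hasStrictFDerivAt_eval (p : MvPolynomial ι 𝕜) (x : ι → 𝕜) :
    HasStrictFDerivAt (fun x => eval x p)
      (∑ j, eval x (pderiv j p) • (ContinuousLinearMap.proj j : (ι → 𝕜) →L[𝕜] 𝕜)) x := by
  classical
  induction p using MvPolynomial.induction_on with
  | C a =>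
    simp only [eval_C]
    exact (hasStrictFDerivAt_const a x).congr_fderiv (by ext; simp)
  | add p q hp hq =>
    simp only [map_add]
    exact (hp.add hq).congr_fderiv (by ext; simp [add_mul, Finset.sum_add_distrib])
  | mul_X p i hp =>
    simp only [map_mul, eval_X]
    refine (hp.mul (ContinuousLinearMap.proj (R := 𝕜) i).hasStrictFDerivAt).congr_fderiv ?_
    ext v
    simp [Derivation.leibniz, pderiv_X, Pi.single_apply, apply_ite, add_mul, mul_assoc,
      Finset.sum_add_distrib, Finset.mul_sum]

variable [CompleteSpace 𝕜] [Finite κ]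

lemma hasStrictFDerivAt_eval_pi (f : κ → MvPolynomial ι 𝕜) (x : ι → 𝕜) [DecidableEq ι] :
    HasStrictFDerivAt (fun x i => eval x (f i))
      (Matrix.toLin' (jacobian f x)).toContinuousLinearMap x := by
  have := Fintype.ofFinite κ
  refine (hasStrictFDerivAt_pi.2 fun i => hasStrictFDerivAt_eval (f i) x).congr_fderiv ?_
  ext v i
  simp [jacobian, Matrix.toLin'_apply, Matrix.mulVec, dotProduct]

lemma map_nhds_eval_eq_of_det_jacobian_ne_zero [DecidableEq ι] {f : ι → MvPolynomial ι 𝕜}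
    {x : ι → 𝕜} (hx : (jacobian f x).det ≠ 0) :
    map (fun x i => eval x (f i)) (𝓝 x) = 𝓝 fun i => eval x (f i) := by
  have hdet : (Matrix.toLin' (jacobian f x)).toContinuousLinearMap.det ≠ 0 := by
    simpa [ContinuousLinearMap.det] using hx
  exact HasStrictFDerivAt.map_nhds_eq_of_equiv
    (f' := ContinuousLinearMap.toContinuousLinearEquivOfDetNeZero _ hdet)
    (by simpa using hasStrictFDerivAt_eval_pi f x)

theorem encard_regular_solutions_le [DecidableEq ι] (f : ι → MvPolynomial ι 𝕜) (y : ι → 𝕜) :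
    {x | (∀ i, eval x (f i) = y i) ∧ (jacobian f x).det ≠ 0}.encard ≤
      (∏ i, (f i).totalDegree : ℕ) := by
  by_contra! hlt
  obtain ⟨S, hS, hcard⟩ := Set.exists_subset_encard_eq (Order.add_one_le_of_lt hlt)
  lift S to Finset (ι → 𝕜) using
    Set.finite_of_encard_eq_coe (k := ∏ i, (f i).totalDegree + 1) hcard
  rw [Set.encard_coe_eq_coe_finsetCard] at hcard
  have hdeg : ∀ i, (f i).totalDegree ≠ 0 := by
    intro i hi
    obtain ⟨x, hx⟩ : S.Nonempty := by
      rw [← Finset.coe_nonempty, ← Set.encard_pos, Set.encard_coe_eq_coe_finsetCard, hcard]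
      simp
    refine (hS hx).2 (Matrix.det_eq_zero_of_row_eq_zero i fun j => ?_)
    rw [jacobian, Matrix.of_apply, totalDegree_eq_zero_iff_eq_C.1 hi, pderiv_C, map_zero]
  obtain ⟨g, hg, hinj⟩ := exists_totalDegree_le_one_injOn_eval S
  obtain ⟨P, hP, hdegP, hrel⟩ := exists_polynomial_relation_s3 f hdeg hg
  have open_at : ∀ x ∈ S, 𝓝 y ≤ map (fun x i => eval x (f i)) (𝓝 x) := fun x hx => by
    rw [map_nhds_eval_eq_of_det_jacobian_ne_zero (hS hx).2, funext (hS hx).1]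
  obtain ⟨z, hPz, hcard_le⟩ :=
    ((frequently_eval_ne_zero (Polynomial.leadingCoeff_ne_zero.2 hP) y).and_eventually
      (eventually_card_le_encard_image_fiber open_at
        (fun x _ => (continuous_eval g).continuousAt) hinj)).exists
  have succ_le : ((∏ i, (f i).totalDegree + 1 : ℕ) : ℕ∞) ≤ (∏ i, (f i).totalDegree : ℕ) :=
    calc _ = (S.card : ℕ∞) := hcard.symm
      _ ≤ P.natDegree := hcard_le.trans (encard_image_fiber_le_natDegree hrel hPz)
      _ ≤ (∏ i, (f i).totalDegree : ℕ) := by exact_mod_cast hdegP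
  exact (Nat.cast_le.1 succ_le).not_gt (Nat.lt_succ_self _)

end Bezout

section AreaFormula
open Set
open scoped ENNReal Function

lemma encard_iUnion_inter_preimage_singleton {α β ι : Type*} [Countable ι] {f : α → β}
    {t : ι → Set α} (hdisj : Pairwise (Disjoint on t)) (hinj : ∀ i, InjOn f (t i)) (y : β) :
    (((⋃ i, t i) ∩ f ⁻¹' {y}).encard : ℝ≥0∞) = ∑' i, (f '' t i).indicator 1 y := by
  let _ : MeasurableSpace α := ⊤
  have fiber_encard (i : ι) : ((t i ∩ f ⁻¹' {y}).encard : ℝ≥0∞) = (f '' t i).indicator 1 y := by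
    by_cases hy : y ∈ f '' t i
    · obtain ⟨x, hx, rfl⟩ := hy
      have : t i ∩ f ⁻¹' {f x} = {x} :=
        Subset.antisymm (fun z hz => hinj i hz.1 hx hz.2) (singleton_subset_iff.2 ⟨hx, rfl⟩)
      simp [this, mem_image_of_mem f hx]
    · have : t i ∩ f ⁻¹' {y} = ∅ :=
        eq_empty_of_forall_notMem fun x hx => hy ⟨x, hx.1, hx.2⟩
      simp [this, hy]
  calc (((⋃ i, t i) ∩ f ⁻¹' {y}).encard : ℝ≥0∞)
      = Measure.count (⋃ i, t i ∩ f ⁻¹' {y}) := by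
        rw [← iUnion_inter, Measure.count_apply MeasurableSpace.measurableSet_top]
    _ = ∑' i, Measure.count (t i ∩ f ⁻¹' {y}) :=
        measure_iUnion (fun i j hij => (hdisj hij).mono inter_subset_left inter_subset_left)
          fun _ => MeasurableSpace.measurableSet_top
    _ = ∑' i, (f '' t i).indicator 1 y := by
        simp_rw [Measure.count_apply MeasurableSpace.measurableSet_top, fiber_encard]

variable {E : Type*} [NormedAddCommGroup E] [NormedSpace ℝ E] [FiniteDimensional ℝ E]
  {f : E → E} {f' : E → E →L[ℝ] E} {s : Set E}

lemma exists_measurable_partition_injOn_s3 [MeasurableSpace E] [BorelSpace E]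
    (hf' : ∀ x ∈ s, HasFDerivWithinAt f (f' x) s x) (hdet : ∀ x ∈ s, (f' x).det ≠ 0) :
    ∃ t : ℕ → Set E, Pairwise (Disjoint on t) ∧ (∀ n, MeasurableSet (t n)) ∧ s ⊆ ⋃ n, t n ∧
      ∀ n, InjOn f (s ∩ t n) := by
  rcases s.eq_empty_or_nonempty with rfl | hs
  · exact ⟨fun _ => ∅, fun _ _ _ => disjoint_bot_left, by simp⟩
  have radius (A : E →L[ℝ] E) : ∃ r : NNReal, r ≠ 0 ∧
      (A.det ≠ 0 → ∀ u, ApproximatesLinearOn f A u r → InjOn f u) := by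
    by_cases hA : A.det = 0
    · exact ⟨1, one_ne_zero, fun h => absurd hA h⟩
    let e := A.toContinuousLinearEquivOfDetNeZero hA
    rcases e.subsingleton_or_nnnorm_symm_pos with hE | hpos
    · exact ⟨1, one_ne_zero, fun _ u _ => Set.injOn_of_subsingleton _ _⟩
    · obtain ⟨r, hr, hr'⟩ := exists_between (inv_pos.2 hpos)
      exact ⟨r, hr.ne', fun _ u hu => ApproximatesLinearOn.injOn (f' := e) hu (.inr hr')⟩
  choose r r_ne_zero injOn_of_approx using radius
  obtain ⟨t, A, hdisj, hmeas, hcover, happrox, hA⟩ :=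
    exists_partition_approximatesLinearOn_of_hasFDerivWithinAt f s f' hf' r r_ne_zero
  refine ⟨t, hdisj, hmeas, hcover, fun n => injOn_of_approx _ ?_ _ (happrox n)⟩
  obtain ⟨x, hx, hAx⟩ := hA hs n
  exact hAx ▸ hdet x hx

theorem lintegral_abs_det_fderiv_mul_eq_lintegral_encard_fiber_mul [MeasurableSpace E]
    [BorelSpace E] (μ : Measure E) [μ.IsAddHaarMeasure] (hs : MeasurableSet s)
    (hf' : ∀ x ∈ s, HasFDerivWithinAt f (f' x) s x) (hdet : ∀ x ∈ s, (f' x).det ≠ 0)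
    {g : E → ℝ≥0∞} (hg : Measurable g) :
    ∫⁻ x in s, .ofReal |(f' x).det| * g (f x) ∂μ =
      ∫⁻ y, (s ∩ f ⁻¹' {y}).encard * g y ∂μ := by
  obtain ⟨t, hdisj, ht, hcover, hinj⟩ := exists_measurable_partition_injOn_s3 hf' hdet
  have hst (n) : MeasurableSet (s ∩ t n) := hs.inter (ht n)
  have hst_disj : Pairwise (Disjoint on fun n => s ∩ t n) := fun i j hij =>
    (hdisj hij).mono inter_subset_right inter_subset_right
  have hst_deriv (n) : ∀ x ∈ s ∩ t n, HasFDerivWithinAt f (f' x) (s ∩ t n) x := fun x hx =>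
    (hf' x hx.1).mono inter_subset_left
  have himage (n) : MeasurableSet (f '' (s ∩ t n)) :=
    measurable_image_of_fderivWithin (hst n) (hst_deriv n) (hinj n)
  have hs_eq : s = ⋃ n, s ∩ t n := by rw [← inter_iUnion, inter_eq_left.2 hcover]
  calc ∫⁻ x in s, .ofReal |(f' x).det| * g (f x) ∂μ
      = ∑' n, ∫⁻ x in s ∩ t n, .ofReal |(f' x).det| * g (f x) ∂μ := by
        conv_lhs => rw [hs_eq]
        exact lintegral_iUnion hst hst_disj _
    _ = ∑' n, ∫⁻ y, (f '' (s ∩ t n)).indicator 1 y * g y ∂μ := by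
        congr! 2 with n
        rw [← lintegral_image_eq_lintegral_abs_det_fderiv_mul μ (hst n) (hst_deriv n) (hinj n),
          ← lintegral_indicator (himage n)]
        refine lintegral_congr fun y => ?_
        by_cases hy : y ∈ f '' (s ∩ t n) <;> simp [hy]
    _ = ∫⁻ y, ∑' n, (f '' (s ∩ t n)).indicator 1 y * g y ∂μ :=
        (lintegral_tsum fun n => ((measurable_one.indicator (himage n)).mul hg).aemeasurable).symm
    _ = ∫⁻ y, (s ∩ f ⁻¹' {y}).encard * g y ∂μ := by
        refine lintegral_congr fun y => ?_
        rw [ENNReal.tsum_mul_right, ← encard_iUnion_inter_preimage_singleton hst_disj hinj, ← hs_eq]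

end AreaFormula

section Normalize
open NormedSpace Metric Set
open scoped ENNReal Pointwise

section Derivative
variable {E : Type*} [NormedAddCommGroup E] [InnerProductSpace ℝ E] {x : E}

lemma hasFDerivAt_norm_of_ne_zero (hx : x ≠ 0) :
    HasFDerivAt (fun x : E => ‖x‖) (innerSL ℝ (normalize x)) x := by
  have := (hasStrictFDerivAt_norm_sq x).hasFDerivAt.sqrt (by simpa using hx)
  simp only [Real.sqrt_sq (norm_nonneg _)] at this
  refine this.congr_fderiv ?_
  ext v
  have : ‖x‖ ≠ 0 := norm_ne_zero_iff.2 hx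
  simp only [one_div, mul_inv_rev, smul_apply, coe_innerSL_apply, nsmul_eq_mul, Nat.cast_ofNat,
    smul_eq_mul, NormedSpace.normalize, map_smul]
  field_simp

lemma hasFDerivAt_normalize (hx : x ≠ 0) :
    HasFDerivAt (fun x : E => normalize x)
      (‖x‖⁻¹ • (.id ℝ E - (innerSL ℝ (normalize x)).smulRight (normalize x))) x := by
  have hx' : ‖x‖ ≠ 0 := norm_ne_zero_iff.2 hx
  refine (((hasDerivAt_inv hx').comp_hasFDerivAt x
    (hasFDerivAt_norm_of_ne_zero hx)).smul (hasFDerivAt_id x)).congr_fderiv ?_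
  ext v
  simp only [Function.comp_apply, NormedSpace.normalize, map_smul, smul_smul, neg_mul, neg_smul,
    id_eq, add_apply, smul_apply, ContinuousLinearMap.id_apply,
    ContinuousLinearMap.smulRight_apply, neg_apply, coe_innerSL_apply, smul_eq_mul,
    sub_eq_add_neg, smul_add, smul_neg, add_right_inj, neg_inj]
  field_simp

end Derivative

section Integral
variable {E : Type*} [NormedAddCommGroup E] [NormedSpace ℝ E]

lemma eq_of_norm_eq_of_normalize_eq {x y : E} (hnorm : ‖x‖ = ‖y‖)
    (h : normalize x = normalize y) : x = y := by
  rw [← norm_smul_normalize x, ← norm_smul_normalize y, hnorm, h]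

lemma Ioo_zero_one_smul_sphere_inter (s : Set E) :
    Ioo (0 : ℝ) 1 • (sphere 0 1 ∩ s) = NormedSpace.normalize ⁻¹' s ∩ (ball 0 1 \ {0}) := by
  ext x
  constructor
  · rintro ⟨r, ⟨hr0, hr1⟩, θ, ⟨hθ, hs⟩, rfl⟩
    have hθ' : ‖θ‖ = 1 := by simpa using hθ
    have : θ ≠ 0 := norm_ne_zero_iff.1 (hθ' ▸ one_ne_zero)
    refine ⟨?_, ?_, ?_⟩
    · simpa [normalize_smul_of_pos hr0, normalize_eq_self_of_norm_eq_one hθ'] using hs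
    · simpa [norm_smul, hθ', abs_of_pos hr0] using hr1
    · simp [hr0.ne', this]
  · rintro ⟨hs, hx1, hx0⟩
    refine ⟨‖x‖, ⟨norm_pos_iff.2 hx0, by simpa using hx1⟩, normalize x, ⟨?_, hs⟩,
      norm_smul_normalize x⟩
    simpa [norm_normalize_eq_one_iff] using hx0

lemma measurable_normedSpace_normalize [MeasurableSpace E] [BorelSpace E]
    [SecondCountableTopology E] : Measurable (NormedSpace.normalize : E → E) :=
  measurable_norm.inv.smul measurable_id

variable [FiniteDimensional ℝ E] [MeasurableSpace E] [BorelSpace E]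

theorem map_coe_toSphere (μ : Measure E) [NullSingletonClass μ] :
    μ.toSphere.map Subtype.val =
      (Module.finrank ℝ E : ℝ≥0∞) • (μ.restrict (ball 0 1)).map NormedSpace.normalize := by
  ext s hs
  rw [Measure.map_apply measurable_subtype_coe hs,
    μ.toSphere_apply' (measurable_subtype_coe hs), Subtype.image_preimage_coe,
    Ioo_zero_one_smul_sphere_inter, Measure.smul_apply, smul_eq_mul,
    Measure.map_apply measurable_normedSpace_normalize hs,
    Measure.restrict_apply (measurable_normedSpace_normalize hs), ← inter_sdiff_assoc,
    measure_sdiff_null (measure_singleton _)]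

lemma lintegral_toSphere (μ : Measure E) [NullSingletonClass μ] {F : E → ℝ≥0∞}
    (hF : Measurable F) :
    ∫⁻ θ, F θ ∂μ.toSphere = Module.finrank ℝ E * ∫⁻ x in ball 0 1, F (normalize x) ∂μ := by
  rw [← lintegral_map hF measurable_subtype_coe, map_coe_toSphere, lintegral_smul_measure,
    lintegral_map hF measurable_normedSpace_normalize, smul_eq_mul]

end Integral

lemma volume_toSphere_univ_euclideanSpace (k : ℕ) :
    (volume : Measure (EuclideanSpace ℝ (Fin (k + 1)))).toSphere univ =
      .ofReal (2 * Real.pi ^ (((k : ℝ) + 1) / 2) / Real.Gamma (((k : ℝ) + 1) / 2)) := by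
  have hpos : 0 < ((k : ℝ) + 1) / 2 := by positivity
  have := Real.Gamma_pos_of_pos hpos
  rw [Measure.toSphere_apply_univ, EuclideanSpace.volume_ball, finrank_euclideanSpace_fin,
    ← ENNReal.ofReal_natCast, ENNReal.ofReal_one, one_pow, one_mul,
    ← ENNReal.ofReal_mul (Nat.cast_nonneg _), Fintype.card_fin, Nat.cast_add_one,
    Real.Gamma_add_one hpos.ne', Real.sqrt_eq_rpow, ← Real.rpow_mul_natCast Real.pi_pos.le]
  congr 1
  push_cast
  field_simp

end Normalize

section SphericalJacobian
open MvPolynomial NormedSpace Metric Set Matrix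
open scoped ENNReal

/-- The square matrix whose rows are `x` and the gradients at `x` of `q 0, …, q (k - 1)`. For a unit
vector `x`, its determinant is, up to sign, the Jacobian determinant at `x` of the restriction of
`q` to the unit sphere. -/
noncomputable def sphericalJacobian {k : ℕ} {R : Type*} [CommSemiring R]
    (q : Fin k → MvPolynomial (Fin (k + 1)) R) (x : Fin (k + 1) → R) :
    Matrix (Fin (k + 1)) (Fin (k + 1)) R :=
  .of (Fin.cons x fun i => jacobian q x i)

lemma jacobian_cons_sum_sq {k : ℕ} {R : Type*} [CommSemiring R]
    (q : Fin k → MvPolynomial (Fin (k + 1)) R) (x : Fin (k + 1) → R) :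
    jacobian (Fin.cons (∑ a, X a ^ 2) q) x =
      (sphericalJacobian q x).updateRow 0 ((2 : R) • sphericalJacobian q x 0) := by
  ext i j
  refine Fin.cases ?_ (fun i => ?_) i
  · simp [jacobian, sphericalJacobian, pderiv_X, Pi.single_apply, Derivation.leibniz_pow]
  · simp [jacobian, sphericalJacobian]

lemma encard_regular_solutions_unit_sphere_le {k : ℕ} (q : Fin k → MvPolynomial (Fin (k + 1)) ℝ)
    (y : Fin k → ℝ) :
    {x | ∑ a, x a ^ 2 = 1 ∧ (∀ i, eval x (q i) = y i) ∧ (sphericalJacobian q x).det ≠ 0}.encard ≤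
      (2 * ∏ i, (q i).totalDegree : ℕ) := by
  refine le_trans (encard_le_encard ?_)
    ((encard_regular_solutions_le (Fin.cons (∑ a, X a ^ 2) q) (Fin.cons 1 y)).trans ?_)
  · rintro x ⟨hx, hy, hdet⟩
    refine ⟨Fin.cases (by simpa using hx) (by simpa using hy), ?_⟩
    rw [jacobian_cons_sum_sq, det_updateRow_smul, updateRow_eq_self]
    exact mul_ne_zero two_ne_zero hdet
  · simp only [Fin.prod_univ_succ, Fin.cons_zero, Fin.cons_succ, Nat.cast_le]
    gcongr
    exact totalDegree_finsetSum_le fun a _ => (totalDegree_pow _ _).trans (by rw [totalDegree_X])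

variable {k : ℕ} (q : Fin k → MvPolynomial (Fin (k + 1)) ℝ)

/-- `u ↦ (‖u‖ ^ (k + 1), q (u / ‖u‖))`. The exponent makes the Jacobian determinant of this map
independent of `‖u‖`. -/
noncomputable def polarMap (u : EuclideanSpace ℝ (Fin (k + 1))) : EuclideanSpace ℝ (Fin (k + 1)) :=
  WithLp.toLp 2 (Fin.cons (‖u‖ ^ (k + 1)) fun i => eval (normalize u).ofLp (q i))

/-- The matrix of the derivative of `polarMap q` at `u ≠ 0`. -/
noncomputable def polarMapJacobian (u : EuclideanSpace ℝ (Fin (k + 1))) :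
    Matrix (Fin (k + 1)) (Fin (k + 1)) ℝ :=
  .of (Fin.cons (((k + 1) * ‖u‖ ^ k) • (normalize u).ofLp) fun i =>
    ‖u‖⁻¹ • (jacobian q (normalize u).ofLp i -
      (jacobian q (normalize u).ofLp i ⬝ᵥ (normalize u).ofLp) • (normalize u).ofLp))

variable {q} {u : EuclideanSpace ℝ (Fin (k + 1))}

lemma hasFDerivAt_polarMap (hu : u ≠ 0) :
    HasFDerivAt (polarMap q) (toLpLin 2 2 (polarMapJacobian q u)).toContinuousLinearMap u := by
  rw [← hasFDerivWithinAt_univ, hasFDerivWithinAt_euclidean]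
  simp only [hasFDerivWithinAt_univ]
  refine Fin.cases ?_ fun i => ?_
  · refine ((hasFDerivAt_norm_of_ne_zero hu).pow (k + 1)).congr_fderiv ?_
    ext v
    simp [polarMapJacobian, mulVec, PiLp.inner_apply, dotProduct, Finset.mul_sum, mul_comm,
      mul_assoc, mul_left_comm]
  · have hnormalize : HasFDerivAt (fun u => (normalize u).ofLp) _ u :=
      (PiLp.hasStrictFDerivAt_ofLp (𝕜 := ℝ) 2 (normalize u)).hasFDerivAt.comp u
        (hasFDerivAt_normalize hu)
    refine ((hasStrictFDerivAt_eval (q i) _).hasFDerivAt.comp u hnormalize).congr_fderiv ?_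
    refine ContinuousLinearMap.ext fun v => ?_
    set θ := normalize u
    have hinner : inner ℝ θ v = θ.ofLp ⬝ᵥ v.ofLp := by
      simp [PiLp.inner_apply, dotProduct, mul_comm]
    have hgrad (w : Fin (k + 1) → ℝ) :
        (∑ j, eval θ.ofLp (pderiv j (q i)) • ContinuousLinearMap.proj (R := ℝ) j) w =
          jacobian q θ.ofLp i ⬝ᵥ w := by
      simp [jacobian, dotProduct]
    rw [ContinuousLinearMap.comp_apply, hgrad]
    calc jacobian q θ.ofLp i ⬝ᵥ (‖u‖⁻¹ • (v.ofLp - inner ℝ θ v • θ.ofLp))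
        = (‖u‖⁻¹ • (jacobian q θ.ofLp i - (jacobian q θ.ofLp i ⬝ᵥ θ.ofLp) • θ.ofLp)) ⬝ᵥ v.ofLp := by
          simp only [hinner, dotProduct_sub, sub_dotProduct, dotProduct_smul, smul_dotProduct,
            smul_eq_mul]
          ring

lemma det_polarMapJacobian (hu : u ≠ 0) :
    (polarMapJacobian q u).det = (k + 1) * (sphericalJacobian q (normalize u).ofLp).det := by
  have hu' : ‖u‖ ≠ 0 := norm_ne_zero_iff.2 hu
  set θ := (normalize u).ofLp
  let scale : Fin (k + 1) → ℝ := Fin.cons ((k + 1) * ‖u‖ ^ k) fun _ => ‖u‖⁻¹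
  calc (polarMapJacobian q u).det
      = (Matrix.of fun i j => scale i * sphericalJacobian q θ i j).det := by
        refine det_eq_of_forall_row_eq_smul_add_const
          (Fin.cons 0 fun i => -(‖u‖⁻¹ * (jacobian q θ i ⬝ᵥ θ) / ((k + 1) * ‖u‖ ^ k))) 0 rfl
          (Fin.cases ?_ fun i => ?_)
        · intro j; simp [polarMapJacobian, sphericalJacobian, scale, θ]
        · intro j
          simp only [polarMapJacobian, of_apply, Fin.cons_succ, Pi.smul_apply, Pi.sub_apply,
            smul_eq_mul, sphericalJacobian, Fin.cons_zero, scale, θ]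
          field_simp
          ring
    _ = (∏ i, scale i) * (sphericalJacobian q θ).det := det_mul_column _ _
    _ = (k + 1) * (sphericalJacobian q θ).det := by
        simp only [scale, Fin.prod_univ_succ, Fin.cons_zero, Fin.cons_succ, Finset.prod_const,
          Finset.card_univ, Fintype.card_fin, inv_pow]
        field_simp

lemma ne_zero_of_det_sphericalJacobian_normalize_ne_zero
    (hu : (sphericalJacobian q (normalize u).ofLp).det ≠ 0) : u ≠ 0 := by
  rintro rfl
  exact hu (det_eq_zero_of_row_eq_zero 0 fun j => by rw [normalize_zero_eq_zero]; rfl)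

lemma encard_regular_fiber_polarMap_le (y : EuclideanSpace ℝ (Fin (k + 1))) :
    ({u | (sphericalJacobian q (normalize u).ofLp).det ≠ 0} ∩ polarMap q ⁻¹' {y}).encard ≤
      (2 * ∏ i, (q i).totalDegree : ℕ) := by
  refine (encard_le_encard_of_injOn (f := fun u => (normalize u).ofLp) ?_ ?_).trans
    (encard_regular_solutions_unit_sphere_le q fun i => y i.succ)
  · rintro u ⟨hu, rfl⟩
    refine ⟨?_, fun i => rfl, hu⟩
    rw [← EuclideanSpace.real_norm_sq_eq,
      norm_normalize (ne_zero_of_det_sphericalJacobian_normalize_ne_zero hu), one_pow]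
  · rintro u ⟨-, rfl⟩ v ⟨-, huv⟩ hθ
    have hnorm : ‖v‖ ^ (k + 1) = ‖u‖ ^ (k + 1) := congrFun (congrArg WithLp.ofLp huv) 0
    exact eq_of_norm_eq_of_normalize_eq
      ((pow_left_inj₀ (norm_nonneg _) (norm_nonneg _) k.succ_ne_zero).1 hnorm.symm)
      (WithLp.ofLp_injective 2 hθ)

lemma lintegral_euclideanSpace_succ {f : ℝ → ℝ≥0∞} {g : (Fin k → ℝ) → ℝ≥0∞} (hf : Measurable f)
    (hg : Measurable g) :
    ∫⁻ y : EuclideanSpace ℝ (Fin (k + 1)), f (y 0) * g (fun i => y i.succ) =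
      (∫⁻ r, f r) * ∫⁻ y, g y := by
  have hfg : Measurable fun y : ℝ × (Fin k → ℝ) => f y.1 * g y.2 := by fun_prop
  rw [← lintegral_prod_mul hf.aemeasurable hg.aemeasurable]
  exact (((volume_preserving_piFinSuccAbove (fun _ => ℝ) (0 : Fin (k + 1))).comp
    (PiLp.volume_preserving_ofLp (Fin (k + 1)))).lintegral_comp hfg)

lemma measurable_det_sphericalJacobian (q : Fin k → MvPolynomial (Fin (k + 1)) ℝ) :
    Measurable fun x => (sphericalJacobian q x).det := by
  refine (continuous_matrix (Fin.cases (fun j => ?_) fun i j => ?_)).matrix_det.measurable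
  · exact continuous_apply j
  · exact continuous_eval _

theorem lintegral_abs_det_mul_comp_polarMap_le {G : EuclideanSpace ℝ (Fin (k + 1)) → ℝ≥0∞}
    (hG : Measurable G) :
    ∫⁻ u, .ofReal |(k + 1) * (sphericalJacobian q (normalize u).ofLp).det| * G (polarMap q u) ≤
      (2 * ∏ i, (q i).totalDegree : ℕ) * ∫⁻ y, G y := by
  let J (u : EuclideanSpace ℝ (Fin (k + 1))) : ℝ := (sphericalJacobian q (normalize u).ofLp).det
  let U : Set (EuclideanSpace ℝ (Fin (k + 1))) := {u | J u ≠ 0}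
  have hJ : Measurable J := (measurable_det_sphericalJacobian q).comp
    ((WithLp.measurable_ofLp 2 _).comp measurable_normedSpace_normalize)
  have hU : MeasurableSet U := hJ (measurableSet_singleton 0).compl
  have ne_zero {u} (hu : u ∈ U) : u ≠ 0 := ne_zero_of_det_sphericalJacobian_normalize_ne_zero hu
  let D (u : EuclideanSpace ℝ (Fin (k + 1))) :=
    (toLpLin 2 2 (polarMapJacobian q u)).toContinuousLinearMap
  have hdet {u} (hu : u ∈ U) : (D u).det = (k + 1) * J u := by
    rw [LinearMap.det_toContinuousLinearMap, LinearMap.det_toLpLin,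
      det_polarMapJacobian (ne_zero hu)]
  calc ∫⁻ u, .ofReal |(k + 1) * J u| * G (polarMap q u)
      = ∫⁻ u in U, .ofReal |(k + 1) * J u| * G (polarMap q u) := by
        refine (setLIntegral_eq_of_support_subset fun u hu => ?_).symm
        refine mt (fun hJu : J u = 0 => ?_) hu
        simp [hJu]
    _ = ∫⁻ u in U, .ofReal |(D u).det| * G (polarMap q u) :=
        setLIntegral_congr_fun hU fun u hu => by simp only [hdet hu]
    _ = ∫⁻ y, (U ∩ polarMap q ⁻¹' {y}).encard * G y :=
        lintegral_abs_det_fderiv_mul_eq_lintegral_encard_fiber_mul volume hU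
          (fun u hu => (hasFDerivAt_polarMap (ne_zero hu)).hasFDerivWithinAt)
          (fun u hu => hdet hu ▸ mul_ne_zero (Nat.cast_add_one_ne_zero k) hu) hG
    _ ≤ ∫⁻ y, (2 * ∏ i, (q i).totalDegree : ℕ) * G y := by
        gcongr with y
        exact (ENat.toENNReal_le.2 (encard_regular_fiber_polarMap_le y)).trans_eq
          (ENat.toENNReal_coe _)
    _ = (2 * ∏ i, (q i).totalDegree : ℕ) * ∫⁻ y, G y := lintegral_const_mul _ hG

/-- The integrand of the area formula for `q` on the unit sphere: the Jacobian of the restriction of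
`q` to the sphere times `g ∘ q`, both extended to all `x`. -/
noncomputable def sphericalIntegrand (q : Fin k → MvPolynomial (Fin (k + 1)) ℝ)
    (g : (Fin k → ℝ) → ℝ≥0∞) (x : Fin (k + 1) → ℝ) : ℝ≥0∞ :=
  .ofReal |(sphericalJacobian q x).det| * g fun i => eval x (q i)

theorem lintegral_toSphere_sphericalIntegrand_le {g : (Fin k → ℝ) → ℝ≥0∞} (hg : Measurable g) :
    ∫⁻ θ : sphere (0 : EuclideanSpace ℝ (Fin (k + 1))) 1, sphericalIntegrand q g θ.1.ofLp
        ∂volume.toSphere ≤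
      (2 * ∏ i, (q i).totalDegree : ℕ) * ∫⁻ y, g y := by
  let G (y : EuclideanSpace ℝ (Fin (k + 1))) : ℝ≥0∞ :=
    (Ioo 0 1).indicator 1 (y 0) * g fun i => y i.succ
  let F (x : EuclideanSpace ℝ (Fin (k + 1))) : ℝ≥0∞ := sphericalIntegrand q g x.ofLp
  have hindicator : Measurable ((Ioo (0 : ℝ) 1).indicator (1 : ℝ → ℝ≥0∞)) :=
    measurable_one.indicator measurableSet_Ioo
  have hF : Measurable F := by
    refine ((measurable_det_sphericalJacobian q).comp (by fun_prop)).abs.ennreal_ofReal.mul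
      (hg.comp (measurable_pi_lambda _ fun i => ?_))
    exact (continuous_eval (q i)).measurable.comp (by fun_prop)
  calc ∫⁻ θ : sphere (0 : EuclideanSpace ℝ (Fin (k + 1))) 1, F θ ∂volume.toSphere
      = (k + 1) * ∫⁻ u in ball 0 1, F (normalize u) := by
        rw [lintegral_toSphere _ hF]; simp
    _ = ∫⁻ u, (ball 0 1).indicator (fun u => (k + 1) * F (normalize u)) u := by
        rw [lintegral_indicator measurableSet_ball,
          lintegral_const_mul (f := fun u => F (normalize u)) _
            (hF.comp measurable_normedSpace_normalize)]
    _ ≤ ∫⁻ u, .ofReal |(k + 1) * (sphericalJacobian q (normalize u).ofLp).det| *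
          G (polarMap q u) := by
        refine lintegral_mono (indicator_le fun u hu => ?_)
        by_cases hdet : (sphericalJacobian q (normalize u).ofLp).det = 0
        · simp [F, sphericalIntegrand, hdet]
        have hnorm : ‖u‖ ^ (k + 1) ∈ Ioo 0 1 :=
          ⟨pow_pos (norm_pos_iff.2 (ne_zero_of_det_sphericalJacobian_normalize_ne_zero hdet)) _,
            pow_lt_one₀ (norm_nonneg u) (by simpa using hu) k.succ_ne_zero⟩
        have hG : G (polarMap q u) = g fun i => eval (normalize u).ofLp (q i) := by
          simp [G, polarMap, hnorm.1, hnorm.2]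
        rw [hG, abs_mul, ENNReal.ofReal_mul (abs_nonneg _), mul_assoc, abs_of_pos (by positivity)]
        exact_mod_cast le_rfl
    _ ≤ (2 * ∏ i, (q i).totalDegree : ℕ) * ∫⁻ y, G y :=
        lintegral_abs_det_mul_comp_polarMap_le (by fun_prop)
    _ = (2 * ∏ i, (q i).totalDegree : ℕ) * ∫⁻ y, g y := by
        rw [lintegral_euclideanSpace_succ hindicator hg]
        simp

end SphericalJacobian

section LinearSubstitution
open MvPolynomial Matrix

variable {ι κ m R : Type*} [CommSemiring R]

lemma totalDegree_bind₁_le {f : ι → MvPolynomial κ R} {c : ℕ} (hf : ∀ i, (f i).totalDegree ≤ c)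
    (p : MvPolynomial ι R) : (bind₁ f p).totalDegree ≤ p.totalDegree * c := by
  rw [← aeval_eq_bind₁, aeval_def, eval₂_eq]
  refine totalDegree_finsetSum_le fun a ha => (totalDegree_mul _ _).trans ?_
  rw [algebraMap_eq, totalDegree_C, zero_add]
  calc (∏ i ∈ a.support, f i ^ a i).totalDegree
      ≤ ∑ i ∈ a.support, (f i ^ a i).totalDegree := totalDegree_finsetProd _ _
    _ ≤ ∑ i ∈ a.support, a i * c := by
        gcongr with i
        exact (totalDegree_pow _ _).trans (by gcongr; exact hf i)
    _ = a.degree * c := (Finset.sum_mul ..).symm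
    _ ≤ p.totalDegree * c := by gcongr; exact le_totalDegree ha

lemma eval_bind₁ (f : ι → MvPolynomial κ R) (p : MvPolynomial ι R) (x : κ → R) :
    eval x (bind₁ f p) = eval (fun i => eval x (f i)) p :=
  eval₂Hom_bind₁ _ _ _ _

lemma pderiv_bind₁ [Fintype ι] (f : ι → MvPolynomial κ R) (p : MvPolynomial ι R) (j : κ) :
    pderiv j (bind₁ f p) = ∑ i, bind₁ f (pderiv i p) * pderiv j (f i) := by
  classical
  induction p using MvPolynomial.induction_on with
  | C a => simp
  | add p q hp hq => simp [hp, hq, add_mul, Finset.sum_add_distrib]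
  | mul_X p i hp =>
    simp [Derivation.leibniz, hp, pderiv_X, Pi.single_apply, apply_ite, add_mul, Finset.mul_sum,
      Finset.sum_add_distrib, mul_assoc]

lemma jacobian_bind₁ [Fintype ι] (f : ι → MvPolynomial m R) (p : κ → MvPolynomial ι R)
    (x : m → R) :
    jacobian (fun i => bind₁ f (p i)) x =
      jacobian p (fun l => eval x (f l)) * jacobian f x := by
  ext i j
  simp [jacobian, pderiv_bind₁, mul_apply, eval_bind₁]

variable [Fintype m]

lemma jacobian_toMvPolynomial (M : Matrix ι m R) (x : m → R) :
    jacobian M.toMvPolynomial x = M := by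
  classical
  ext i j
  simp [jacobian, toMvPolynomial, pderiv_X, ← C_mul_X_eq_monomial, Pi.single_apply, apply_ite]

/-- The polynomial map `x ↦ p (x ᵥ* Z)`. -/
noncomputable def substVecMul (p : κ → MvPolynomial ι R) (Z : Matrix m ι R) (i : κ) :
    MvPolynomial m R :=
  bind₁ Zᵀ.toMvPolynomial (p i)

variable (p : κ → MvPolynomial ι R) (Z : Matrix m ι R) (x : m → R)

lemma eval_substVecMul (i : κ) : eval x (substVecMul p Z i) = eval (x ᵥ* Z) (p i) := by
  simp [substVecMul, eval_bind₁, toMvPolynomial_eval_eq_apply, mulVec_transpose]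

lemma totalDegree_substVecMul_le [Nontrivial R] (i : κ) :
    (substVecMul p Z i).totalDegree ≤ (p i).totalDegree := by
  simpa [substVecMul] using totalDegree_bind₁_le (toMvPolynomial_totalDegree_le Zᵀ) (p i)

lemma jacobian_substVecMul [Fintype ι] :
    jacobian (substVecMul p Z) x = jacobian p (x ᵥ* Z) * Zᵀ := by
  unfold substVecMul
  rw [jacobian_bind₁, jacobian_toMvPolynomial]
  simp [toMvPolynomial_eval_eq_apply, mulVec_transpose]

end LinearSubstitution

section GaussianMatrix
open Matrix

lemma measurePreserving_curry_pi (ι κ : Type*) {X : Type*} [Fintype ι] [Fintype κ]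
    [MeasurableSpace X] (ν : Measure X) [IsProbabilityMeasure ν] :
    MeasurePreserving (MeasurableEquiv.curry ι κ X) (.pi fun _ => ν)
      (.pi fun _ => .pi fun _ => ν) := by
  refine ⟨MeasurableEquiv.measurable _, ?_⟩
  simpa only [Measure.infinitePi_eq_pi] using Measure.infinitePi_map_curry fun (_ : ι) (_ : κ) => ν

lemma measurePreserving_pi_transpose {ι κ X : Type*} [Fintype ι] [Fintype κ] [MeasurableSpace X]
    (ν : Measure X) [IsProbabilityMeasure ν] :
    MeasurePreserving (fun (Z : ι → κ → X) j i => Z i j)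
      (.pi fun _ => .pi fun _ => ν) (.pi fun _ => .pi fun _ => ν) :=
  (measurePreserving_curry_pi κ ι ν).comp
    ((measurePreserving_piCongrLeft (fun _ => ν) (Equiv.prodComm ι κ)).comp
      ((measurePreserving_curry_pi ι κ ν).symm _))

variable {ι : Type*} [Fintype ι] [DecidableEq ι]

lemma measurePreserving_mulVec_gaussianReal {Q : Matrix ι ι ℝ} (hQ : Q ∈ orthogonalGroup ι ℝ) :
    MeasurePreserving (Q *ᵥ ·) (.pi fun _ => gaussianReal 0 1) (.pi fun _ => gaussianReal 0 1) := by
  let e : EuclideanSpace ℝ ι ≃ₗᵢ[ℝ] EuclideanSpace ℝ ι :=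
    Unitary.linearIsometryEquiv
      ⟨toEuclideanCLM (n := ι) (𝕜 := ℝ) Q, Unitary.map_mem (toEuclideanCLM (n := ι) (𝕜 := ℝ)) hQ⟩
  have toLp : MeasurePreserving (WithLp.toLp 2) (.pi fun _ : ι => gaussianReal 0 1)
      (ProbabilityTheory.stdGaussian (EuclideanSpace ℝ ι)) :=
    ⟨by fun_prop, map_pi_eq_stdGaussian⟩
  have isometry : MeasurePreserving e (ProbabilityTheory.stdGaussian _)
      (ProbabilityTheory.stdGaussian _) :=
    ⟨e.continuous.measurable, stdGaussian_map e⟩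
  exact (toLp.symm (MeasurableEquiv.toLp 2 _)).comp (isometry.comp toLp)

lemma measurePreserving_matrix_mul_gaussianReal {κ : Type*} [Fintype κ] {Q : Matrix ι ι ℝ}
    (hQ : Q ∈ orthogonalGroup ι ℝ) :
    MeasurePreserving (fun (Z : ι → κ → ℝ) i l => (Q * of Z) i l)
      (.pi fun _ => .pi fun _ => gaussianReal 0 1) (.pi fun _ => .pi fun _ => gaussianReal 0 1) :=
  (measurePreserving_pi_transpose (gaussianReal 0 1)).comp
    ((measurePreserving_pi _ _ fun _ => measurePreserving_mulVec_gaussianReal hQ).comp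
      (measurePreserving_pi_transpose (gaussianReal 0 1)))

lemma exists_orthogonal_mulVec_single_eq (i : ι) {u : EuclideanSpace ℝ ι} (hu : ‖u‖ = 1) :
    ∃ Q ∈ orthogonalGroup ι ℝ, Q *ᵥ Pi.single i 1 = u.ofLp := by
  have hortho : Orthonormal ℝ (Set.domRestrict {i} fun _ => u) :=
    ⟨fun _ => hu, fun i j hij => absurd (Subsingleton.elim i j) hij⟩
  obtain ⟨b, hb⟩ := hortho.exists_orthonormalBasis_extension_of_card_eq (by simp)
  refine ⟨(EuclideanSpace.basisFun ι ℝ).toBasis.toMatrix b,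
    OrthonormalBasis.toMatrix_orthonormalBasis_mem_unitary _ b, ?_⟩
  ext j
  simp [Module.Basis.toMatrix_apply, hb i rfl]

end GaussianMatrix

section RandomSubstitution
open MvPolynomial Metric Matrix
open scoped ENNReal

variable {k : ℕ} {ι : Type*} (p : Fin k → MvPolynomial ι ℝ)

section Rotation
variable [Finite ι] {Q : Matrix (Fin (k + 1)) (Fin (k + 1)) ℝ}
  (hQ : Q ∈ orthogonalGroup (Fin (k + 1)) ℝ) (Z : Matrix (Fin (k + 1)) ι ℝ) (x : Fin (k + 1) → ℝ)
include hQ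

lemma sphericalJacobian_substVecMul_mulVec :
    sphericalJacobian (substVecMul p Z) (Q *ᵥ x) * Q =
      sphericalJacobian (substVecMul p (Qᵀ * Z)) x := by
  have := Fintype.ofFinite ι
  have hQQ : Qᵀ * Q = 1 := (mem_orthogonalGroup_iff' _ _).1 hQ
  ext i j
  refine Fin.cases ?_ (fun i => ?_) i
  · have : (Q *ᵥ x) ᵥ* Q = x := by
      rw [← mulVec_transpose, mulVec_mulVec, hQQ, one_mulVec]
    exact congrFun this j
  · have : jacobian (substVecMul p Z) (Q *ᵥ x) * Q = jacobian (substVecMul p (Qᵀ * Z)) x := by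
      rw [jacobian_substVecMul, jacobian_substVecMul, ← vecMul_vecMul, vecMul_transpose,
        transpose_mul, transpose_transpose, Matrix.mul_assoc]
    exact congrFun₂ this i j

lemma sphericalIntegrand_substVecMul_mulVec (g : (Fin k → ℝ) → ℝ≥0∞) :
    sphericalIntegrand (substVecMul p Z) g (Q *ᵥ x) =
      sphericalIntegrand (substVecMul p (Qᵀ * Z)) g x := by
  have hdet : |Q.det| = 1 := (abs_eq zero_le_one).2 <| by
    simpa [← pow_two] using congrArg det ((mem_orthogonalGroup_iff' _ _).1 hQ)
  simp_rw [sphericalIntegrand, ← sphericalJacobian_substVecMul_mulVec p hQ, det_mul, abs_mul, hdet,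
    mul_one, eval_substVecMul, ← vecMul_vecMul, vecMul_transpose]

end Rotation

lemma measurable_sphericalIntegrand_substVecMul [Finite ι] {g : (Fin k → ℝ) → ℝ≥0∞}
    (hg : Measurable g) :
    Measurable fun ω : (Fin (k + 1) → ℝ) × (Fin (k + 1) → ι → ℝ) =>
      sphericalIntegrand (substVecMul p (of ω.2)) g ω.1 := by
  have := Fintype.ofFinite ι
  have heval (r : MvPolynomial ι ℝ) :
      Continuous fun ω : (Fin (k + 1) → ℝ) × (Fin (k + 1) → ι → ℝ) => eval (ω.1 ᵥ* of ω.2) r :=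
    (continuous_eval r).comp (continuous_fst.matrix_vecMul continuous_snd)
  have hdet : Continuous fun ω : (Fin (k + 1) → ℝ) × (Fin (k + 1) → ι → ℝ) =>
      (sphericalJacobian (substVecMul p (of ω.2)) ω.1).det := by
    refine (continuous_matrix (Fin.cases (fun j => ?_) fun i j => ?_)).matrix_det
    · exact (continuous_apply j).comp continuous_fst
    · simp_rw [sphericalJacobian, jacobian_substVecMul]
      exact continuous_finsetSum _ fun l _ => (heval _).mul (by fun_prop)
  refine hdet.measurable.abs.ennreal_ofReal.mul (hg.comp (measurable_pi_lambda _ fun i => ?_))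
  simpa only [eval_substVecMul] using (heval (p i)).measurable

variable [Fintype ι]

theorem lintegral_sphericalIntegrand_substVecMul_eq {g : (Fin k → ℝ) → ℝ≥0∞} (hg : Measurable g)
    {θ : EuclideanSpace ℝ (Fin (k + 1))} (hθ : ‖θ‖ = 1) :
    ∫⁻ Z : Fin (k + 1) → ι → ℝ, sphericalIntegrand (substVecMul p (of Z)) g θ.ofLp
        ∂(.pi fun _ => .pi fun _ => gaussianReal 0 1) =
      ∫⁻ Z : Fin (k + 1) → ι → ℝ, sphericalIntegrand (substVecMul p (of Z)) g (Pi.single 0 1)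
        ∂(.pi fun _ => .pi fun _ => gaussianReal 0 1) := by
  obtain ⟨Q, hQ, hQθ⟩ := exists_orthogonal_mulVec_single_eq 0 hθ
  have hQT : Qᵀ ∈ orthogonalGroup (Fin (k + 1)) ℝ := Unitary.star_mem hQ
  simp_rw [← hQθ, sphericalIntegrand_substVecMul_mulVec p hQ]
  exact (measurePreserving_matrix_mul_gaussianReal hQT).lintegral_comp
    ((measurable_sphericalIntegrand_substVecMul p hg).comp measurable_prodMk_left)

lemma sphericalIntegrand_substVecMul_single_zero (g : (Fin k → ℝ) → ℝ≥0∞)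
    (Z : Matrix (Fin (k + 1)) ι ℝ) :
    sphericalIntegrand (substVecMul p Z) g (Pi.single 0 1) =
      .ofReal |(jacobian p (Z 0) * (of fun j => Z (Fin.succ j))ᵀ).det| *
        g fun i => eval (Z 0) (p i) := by
  have hdet : (sphericalJacobian (substVecMul p Z) (Pi.single 0 1)).det =
      (jacobian p (Z 0) * (of fun j => Z (Fin.succ j))ᵀ).det := by
    rw [det_succ_row_zero, Fin.sum_univ_succ]
    simp only [sphericalJacobian, jacobian_substVecMul, of_apply, Fin.cons_zero, Pi.single_eq_same,
      Pi.single_eq_of_ne, ne_eq, Fin.succ_ne_zero, not_false_eq_true, single_one_vecMul,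
      Fin.succAbove_zero, Fin.val_zero, pow_zero, one_mul, mul_one, mul_zero, zero_mul,
      Finset.sum_const_zero, add_zero]
    rfl
  simp_rw [sphericalIntegrand, hdet, eval_substVecMul, single_one_vecMul]
  rfl

theorem volume_toSphere_mul_lintegral_sphericalIntegrand_substVecMul_le
    {g : (Fin k → ℝ) → ℝ≥0∞} (hg : Measurable g) :
    (volume : Measure (EuclideanSpace ℝ (Fin (k + 1)))).toSphere .univ *
        ∫⁻ Z : Fin (k + 1) → ι → ℝ, sphericalIntegrand (substVecMul p (of Z)) g (Pi.single 0 1)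
          ∂(.pi fun _ => .pi fun _ => gaussianReal 0 1) ≤
      (2 * ∏ i, (p i).totalDegree : ℕ) * ∫⁻ y, g y := by
  let μ : Measure (Fin (k + 1) → ι → ℝ) := .pi fun _ => .pi fun _ => gaussianReal 0 1
  let F (θ : sphere (0 : EuclideanSpace ℝ (Fin (k + 1))) 1) (Z : Fin (k + 1) → ι → ℝ) : ℝ≥0∞ :=
    sphericalIntegrand (substVecMul p (of Z)) g θ.1.ofLp
  have hofLp : Measurable fun θ : sphere (0 : EuclideanSpace ℝ (Fin (k + 1))) 1 => θ.1.ofLp := by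
    fun_prop
  have hF : Measurable F.uncurry :=
    ((measurable_sphericalIntegrand_substVecMul p hg).comp (hofLp.prodMap measurable_id) :)
  calc volume.toSphere .univ *
        ∫⁻ Z, sphericalIntegrand (substVecMul p (of Z)) g (Pi.single 0 1) ∂μ
      = ∫⁻ θ, ∫⁻ Z, F θ Z ∂μ ∂volume.toSphere := by
        rw [mul_comm, ← lintegral_const]
        exact lintegral_congr fun θ =>
          (lintegral_sphericalIntegrand_substVecMul_eq p hg (mem_sphere_zero_iff_norm.1 θ.2)).symm
    _ = ∫⁻ Z, ∫⁻ θ, F θ Z ∂volume.toSphere ∂μ := lintegral_lintegral_swap hF.aemeasurable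
    _ ≤ ∫⁻ _, (2 * ∏ i, (p i).totalDegree : ℕ) * (∫⁻ y, g y) ∂μ := by
        refine lintegral_mono fun Z => (lintegral_toSphere_sphericalIntegrand_le hg).trans ?_
        gcongr with i
        exact totalDegree_substVecMul_le p _ i
    _ = (2 * ∏ i, (p i).totalDegree : ℕ) * ∫⁻ y, g y := by
        rw [lintegral_const, measure_univ, mul_one]

theorem volume_toSphere_mul_lintegral_abs_det_mul_le {g : (Fin k → ℝ) → ℝ≥0∞} (hg : Measurable g) :
    (volume : Measure (EuclideanSpace ℝ (Fin (k + 1)))).toSphere .univ *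
        ∫⁻ ω : (ι → ℝ) × (Fin k → ι → ℝ),
          .ofReal |(jacobian p ω.1 * (of ω.2)ᵀ).det| * g (fun i => eval ω.1 (p i))
          ∂(Measure.pi fun _ => gaussianReal 0 1).prod
            (.pi fun _ => .pi fun _ => gaussianReal 0 1) ≤
      (2 * ∏ i, (p i).totalDegree : ℕ) * ∫⁻ y, g y := by
  let γ : Measure (ι → ℝ) := .pi fun _ => gaussianReal 0 1
  refine le_of_eq_of_le ?_ (volume_toSphere_mul_lintegral_sphericalIntegrand_substVecMul_le p hg)
  rw [← (measurePreserving_piFinSuccAbove (fun _ => γ) 0).lintegral_comp_emb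
    (MeasurableEquiv.measurableEmbedding _)]
  simp_rw [sphericalIntegrand_substVecMul_single_zero]
  rfl

lemma measurable_abs_det_jacobian_mul {g : (Fin k → ℝ) → ℝ≥0∞} (hg : Measurable g) :
    Measurable fun ω : (ι → ℝ) × (Fin k → ι → ℝ) =>
      .ofReal |(jacobian p ω.1 * (of ω.2)ᵀ).det| * g (fun i => eval ω.1 (p i)) := by
  have heval (r : MvPolynomial ι ℝ) :
      Continuous fun ω : (ι → ℝ) × (Fin k → ι → ℝ) => eval ω.1 r :=
    (continuous_eval r).comp continuous_fst
  have hdet : Continuous fun ω : (ι → ℝ) × (Fin k → ι → ℝ) =>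
      (jacobian p ω.1 * (of ω.2)ᵀ).det :=
    (continuous_matrix fun i j => continuous_finsetSum _ fun l _ =>
      (heval (pderiv l (p i))).mul (by fun_prop)).matrix_det
  exact hdet.measurable.abs.ennreal_ofReal.mul
    (hg.comp (measurable_pi_lambda _ fun i => (heval (p i)).measurable))

theorem volume_toSphere_mul_measure_lt_abs_det_le {B : Set (Fin k → ℝ)} (hB : MeasurableSet B)
    (δ : ℝ) :
    (volume : Measure (EuclideanSpace ℝ (Fin (k + 1)))).toSphere .univ * (.ofReal δ *
        ((Measure.pi fun _ => gaussianReal 0 1).prod (.pi fun _ => .pi fun _ => gaussianReal 0 1))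
          {ω : (ι → ℝ) × (Fin k → ι → ℝ) |
            (fun i => eval ω.1 (p i)) ∈ B ∧ δ < |(jacobian p ω.1 * (of ω.2)ᵀ).det|}) ≤
      (2 * ∏ i, (p i).totalDegree : ℕ) * volume B := by
  have hg : Measurable (B.indicator (1 : (Fin k → ℝ) → ℝ≥0∞)) := measurable_one.indicator hB
  rw [← lintegral_indicator_one hB]
  refine le_trans ?_ (volume_toSphere_mul_lintegral_abs_det_mul_le p hg)
  gcongr
  refine le_trans ?_ (mul_meas_ge_le_lintegral (measurable_abs_det_jacobian_mul p hg) (.ofReal δ))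
  gcongr with ω
  rintro ⟨hB, hδ⟩
  simpa [hB] using ENNReal.ofReal_le_ofReal hδ.le

end RandomSubstitution

lemma volume_pi_Ioo_neg_self {κ : Type*} [Fintype κ] {ε : κ → ℝ} (hε : ∀ i, 0 ≤ ε i) :
    volume (Set.univ.pi fun i => Set.Ioo (-ε i) (ε i)) =
      .ofReal (2 ^ Fintype.card κ * ∏ i, ε i) := by
  simp_rw [Real.volume_pi_Ioo, sub_neg_eq_add, ← two_mul]
  rw [← ENNReal.ofReal_prod_of_nonneg fun i _ => mul_nonneg zero_le_two (hε i),
    Finset.prod_mul_distrib, Finset.prod_const, Finset.card_univ]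

/-- For polynomials `p¹, …, p^k` of degrees at most `d₁, …, d_k`, `δ > 0`, `ε₁, …, ε_k > 0`,
and independent standard Gaussians `X, Y¹, …, Y^k` on `ℝⁿ`,
`Pr(|pⁱ(X)| < εᵢ for all i and |det(⟨∇pⁱ(X), Y^j⟩)_{ij}| > δ)
  ≤ 2^{k+1} ∏ dᵢ ∏ εᵢ / (δ V_k)` where `V_k = 2 π^{(k+1)/2} / Γ((k+1)/2)`. -/
theorem strong_anticoncentration_lemma (k : ℕ) (hk : 0 < k) (n : ℕ)
    (d : Fin k → ℕ) (p : Fin k → MvPolynomial (Fin n) ℝ)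
    (hdeg : ∀ i, (p i).totalDegree ≤ d i)
    (δ : ℝ) (hδ : 0 < δ) (ε : Fin k → ℝ) (hε : ∀ i, 0 < ε i) :
    ((stdGaussian n).prod (Measure.pi fun _ : Fin k => stdGaussian n))
        {ω | (∀ i, |MvPolynomial.eval ω.1 (p i)| < ε i) ∧
          δ < |Matrix.det (Matrix.of fun i j : Fin k =>
            ∑ l, MvPolynomial.eval ω.1 (MvPolynomial.pderiv l (p i)) * ω.2 j l)|} ≤
      ENNReal.ofReal (2 ^ (k + 1) * (∏ i, (d i : ℝ)) * (∏ i, ε i) /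
        (δ * (2 * Real.pi ^ (((k : ℝ) + 1) / 2) / Real.Gamma (((k : ℝ) + 1) / 2)))) := by
  set V : ℝ := 2 * Real.pi ^ (((k : ℝ) + 1) / 2) / Real.Gamma (((k : ℝ) + 1) / 2)
  set E : Set ((Fin n → ℝ) × (Fin k → Fin n → ℝ)) := {ω | _}
  let B : Set (Fin k → ℝ) := .pi .univ fun i => .Ioo (-ε i) (ε i)
  have hE : E = {ω | (fun i => MvPolynomial.eval ω.1 (p i)) ∈ B ∧
      δ < |(jacobian p ω.1 * (Matrix.of ω.2).transpose).det|} := by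
    simp_rw [E, B, Set.mem_univ_pi, Set.mem_Ioo, ← abs_lt]
    rfl
  have hVδ : 0 < δ * V := by positivity
  rw [ENNReal.ofReal_div_of_pos hVδ, ENNReal.le_div_iff_mul_le (by simp [hVδ]) (by simp)]
  calc ((stdGaussian n).prod (Measure.pi fun _ : Fin k => stdGaussian n)) E * .ofReal (δ * V)
      = .ofReal V * (.ofReal δ * (stdGaussian n).prod (.pi fun _ => stdGaussian n) E) := by
        rw [ENNReal.ofReal_mul hδ.le]; ring
    _ ≤ (2 * ∏ i, (p i).totalDegree : ℕ) * volume B := by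
        rw [← volume_toSphere_univ_euclideanSpace, hE]
        exact volume_toSphere_mul_measure_lt_abs_det_le p
          (.univ_pi fun i => measurableSet_Ioo) δ
    _ ≤ (2 * ∏ i, d i : ℕ) * volume B := by gcongr with i; exact hdeg i
    _ = .ofReal (2 ^ (k + 1) * (∏ i, (d i : ℝ)) * ∏ i, ε i) := by
        rw [volume_pi_Ioo_neg_self fun i => (hε i).le, Fintype.card_fin, ← ENNReal.ofReal_natCast,
          ← ENNReal.ofReal_mul (Nat.cast_nonneg _)]
        congr 1
        push_cast
        ring
end
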